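/- For every integer n ≥ 2 and every ε > 0, Kac's random walk on SO(n) satisfies the mixing-time bound τ_{D,2}(ε) ≤ ⌈n² ln(π√n / ε)⌉; that is, for every probability measure μ on SO(n) and every integer t ≥ n² ln(π√n / ε), one has W_{D,2}(μK^t, H) ≤ ε, where H is the Haar probability measure on SO(n). -/

import Mathlib

open MeasureTheory ENNReal Filter Topology Matrix

noncomputable section

/-- The (Borel) product measurable structure on matrices. -/
instance matrixMeasurableSpace {m n R : Type*} [MeasurableSpace R] :
    MeasurableSpace (Matrix m n R) :=
  (inferInstance : MeasurableSpace (m → n → R))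

/-- `η` is a coupling of `μ` and `ν`: its two marginals are `μ` and `ν`. -/
def IsCoupling {X : Type*} [MeasurableSpace X] (η : Measure (X × X)) (μ ν : Measure X) : Prop :=
  η.map Prod.fst = μ ∧ η.map Prod.snd = ν

/-- The `L^p` transportation cost (Wasserstein) distance associated with the distance
function `d`, with values in `ℝ≥0∞`:
`W_{d,p}(μ,ν) = inf { (∫ d(x,y)^p dη)^{1/p} : η a coupling of (μ,ν) }`. -/
def wassersteinE {X : Type*} [MeasurableSpace X] (d : X → X → ℝ≥0∞) (p : ℝ)
    (μ ν : Measure X) : ℝ≥0∞ :=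
  ⨅ (η : Measure (X × X)) (_ : IsCoupling η μ ν), (∫⁻ z, d z.1 z.2 ^ p ∂η) ^ (1 / p)

/-- The length of the curve `γ` over `[0,1]`, w.r.t. the distance function `d`:
the supremum, over all partitions `0 = t 0 ≤ t 1 ≤ ⋯ ≤ t k = 1` of `[0,1]`, of the sums of
the distances between consecutive points of the curve. -/
def pathLengthE {X : Type*} (d : X → X → ℝ≥0∞) (γ : ℝ → X) : ℝ≥0∞ :=
  ⨆ (k : ℕ) (t : Fin (k + 1) → ℝ) (_ : Monotone t) (_ : t 0 = 0) (_ : t (Fin.last k) = 1),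
    ∑ i : Fin k, d (γ (t i.castSucc)) (γ (t i.succ))

/-- The intrinsic (length) distance on the set `S` induced by the distance function `d`:
the infimum of `d`-lengths of continuous paths joining `a` to `b` inside `S`. -/
def intrinsicDistE {X : Type*} [TopologicalSpace X] (d : X → X → ℝ≥0∞) (S : Set X)
    (a b : X) : ℝ≥0∞ :=
  ⨅ (γ : ℝ → X) (_ : ContinuousOn γ (Set.Icc 0 1)) (_ : Set.MapsTo γ (Set.Icc 0 1) S)
    (_ : γ 0 = a) (_ : γ 1 = b), pathLengthE d γ

/-- `t` iterated steps of the Markov transition kernel `P`, started from the initial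
distribution `μ` (so `kernelIterate P t μ = μP^t`). -/
def kernelIterate {X : Type*} [MeasurableSpace X] (P : X → Measure X) :
    ℕ → Measure X → Measure X
  | 0, μ => μ
  | t + 1, μ => (kernelIterate P t μ).bind P

/-- A Haar probability measure for the multiplicative set `S`, viewed as a measure on the
ambient space: a probability measure carried by `S` that is invariant under left and right
translations by all elements of `S`. -/
def IsHaarLike {X : Type*} [MeasurableSpace X] [Mul X] (S : Set X) (μ : Measure X) : Prop :=
  IsProbabilityMeasure μ ∧ μ Sᶜ = 0 ∧
    ∀ a ∈ S, μ.map (fun x => a * x) = μ ∧ μ.map (fun x => x * a) = μ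

/-- The Haar probability measure of a compact matrix group `S` (such as `SO(n)` or `U(n)`),
viewed as a measure on the ambient matrix space.  For such `S` a translation-invariant
probability measure exists and is unique, so `haarLike S` is *the* Haar probability
measure of `S`. -/
def haarLike {X : Type*} [MeasurableSpace X] [Mul X] (S : Set X) : Measure X := by
  classical exact if h : ∃ μ, IsHaarLike S μ then h.choose else 0

/-- The set of pairs `1 ≤ i < j ≤ n` of indices. -/
def pairs (n : ℕ) : Finset (Fin n × Fin n) :=
  Finset.univ.filter fun p => p.1 < p.2

/-- The special orthogonal group `SO(n)`, as a subset of the `n × n` real matrices. -/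
def SO (n : ℕ) : Set (Matrix (Fin n) (Fin n) ℝ) :=
  {a | a * aᵀ = 1 ∧ a.det = 1}

/-- The Hilbert–Schmidt (Frobenius) distance `‖a - b‖_hs = √(Tr((a-b)ᵀ(a-b)))` between real
matrices, as an `ℝ≥0∞`-valued distance function. -/
def hsDist {n : ℕ} (a b : Matrix (Fin n) (Fin n) ℝ) : ℝ≥0∞ :=
  ENNReal.ofReal (Real.sqrt (Matrix.trace ((a - b)ᵀ * (a - b))))

/-- The intrinsic (Riemannian/length) metric `D` on `SO(n)` induced by the Hilbert–Schmidt
norm: the infimum of `hs`-lengths of continuous paths inside `SO(n)`. -/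
def DSO (n : ℕ) (a b : Matrix (Fin n) (Fin n) ℝ) : ℝ≥0∞ :=
  intrinsicDistE hsDist (SO n) a b

/-- The rotation `R(i,j,θ)` by the angle `θ` of the plane spanned by the `i`-th and `j`-th
canonical basis vectors: `R e_i = cos θ e_i + sin θ e_j`, `R e_j = cos θ e_j - sin θ e_i`,
and `R e_k = e_k` for `k ∉ {i,j}`. -/
def kacRot {n : ℕ} (i j : Fin n) (θ : ℝ) : Matrix (Fin n) (Fin n) ℝ :=
  Matrix.of fun k l =>
    if k = i ∧ l = i then Real.cos θ
    else if k = j ∧ l = i then Real.sin θ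
    else if k = i ∧ l = j then -Real.sin θ
    else if k = j ∧ l = j then Real.cos θ
    else if k = l then 1 else 0

/-- The uniform probability measure on the angle interval `[0, 2π]`. -/
def uniformAngle : Measure ℝ :=
  (ENNReal.ofReal (2 * Real.pi))⁻¹ • MeasureTheory.volume.restrict (Set.Icc 0 (2 * Real.pi))

/-- The transition kernel of Kac's random walk on `SO(n)`:
`K_x = (1/(2π·C(n,2))) ∑_{1≤i<j≤n} ∫₀^{2π} δ_{R(i,j,θ)·x} dθ`. -/
def kacKernel (n : ℕ) (x : Matrix (Fin n) (Fin n) ℝ) : Measure (Matrix (Fin n) (Fin n) ℝ) :=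
  (n.choose 2 : ℝ≥0∞)⁻¹ •
    ∑ p ∈ pairs n, uniformAngle.map fun θ => kacRot p.1 p.2 θ * x

/-!
Run the walk simultaneously from all points of a random smooth curve `X` in `SO(n)` with
`X' = A X`. At each step the points of the curve share the same plane `(i,j)` and, up to a shift,
the same uniform angle: the point `X s` is rotated by `R(i,j,θ - ∫₀ˢ A_{ji})`. By translation
invariance of the uniform angle every point performs a genuine step of the walk, while the shift
cancels exactly the `(i,j)` component of the velocity. Averaging over the `C(n,2)` planes, the mean
energy `E ∫₀¹ ‖A‖²` is multiplied by `1 - 1/C(n,2)` at each step, and it bounds the squared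
transportation cost between the laws of the two endpoints. Starting from the one-parameter curves
`exp(s L) x`, with `x` of law `μ` and `exp L` of law `H` and independent of `x`, where the logarithm
satisfies `‖L‖² ≤ π² n`, the endpoints have laws `μ` and `H`; finally `H` is stationary, and
`(1 - 1/C(n,2))ᵗ ≤ exp(-2t/n²)`.
-/

instance matrixBorelSpace {m n : Type*} [Countable m] [Countable n] : BorelSpace (Matrix m n ℝ) :=
  (inferInstance : BorelSpace (m → n → ℝ))

instance matrixSecondCountable {m n : Type*} [Countable m] [Countable n] :
    SecondCountableTopology (Matrix m n ℝ) :=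
  (inferInstance : SecondCountableTopology (m → n → ℝ))

instance matrixMeasurableMul {n : ℕ} : MeasurableMul₂ (Matrix (Fin n) (Fin n) ℝ) :=
  ⟨(continuous_fst.matrix_mul continuous_snd).measurable⟩

theorem isCompact_of_isClosed_of_abs_apply_le {m n : Type*} {S : Set (Matrix m n ℝ)}
    (hS : IsClosed S) {r : ℝ} (h : ∀ a ∈ S, ∀ i j, |a i j| ≤ r) : IsCompact S := by
  have hK : IsCompact (Set.univ.pi fun _ : m => Set.univ.pi fun _ : n => Set.Icc (-r) r) :=
    isCompact_univ_pi fun _ => isCompact_univ_pi fun _ => isCompact_Icc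
  exact IsCompact.of_isClosed_subset (X := m → n → ℝ) hK hS
    fun a ha i _ j _ => abs_le.mp (h a ha i j)

/-! ### The group `SO(n)` and its Haar measure -/

namespace SO

variable {n : ℕ} {a b : Matrix (Fin n) (Fin n) ℝ}

theorem coe_specialOrthogonalGroup (n : ℕ) : (specialOrthogonalGroup (Fin n) ℝ : Set _) = SO n := by
  ext a
  rw [SetLike.mem_coe, mem_specialOrthogonalGroup_iff, mem_orthogonalGroup_iff]
  rfl

theorem mul_transpose_self (ha : a ∈ SO n) : a * aᵀ = 1 := ha.1

theorem transpose_mul_self (ha : a ∈ SO n) : aᵀ * a = 1 := mul_eq_one_comm.mp ha.1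

theorem one_mem (n : ℕ) : (1 : Matrix (Fin n) (Fin n) ℝ) ∈ SO n := by
  simp [SO]

theorem mul_mem (ha : a ∈ SO n) (hb : b ∈ SO n) : a * b ∈ SO n := by
  rw [← coe_specialOrthogonalGroup] at *
  exact Submonoid.mul_mem _ ha hb

theorem isClosed (n : ℕ) : IsClosed (SO n) :=
  (isClosed_eq (continuous_id.matrix_mul continuous_id.matrix_transpose) continuous_const).inter
    (isClosed_eq continuous_id.matrix_det continuous_const)

theorem measurableSet (n : ℕ) : MeasurableSet (SO n) := (SO.isClosed n).measurableSet

theorem isCompact (n : ℕ) : IsCompact (SO n) :=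
  isCompact_of_isClosed_of_abs_apply_le (SO.isClosed n) fun _ ha =>
    entry_norm_bound_of_unitary ((mem_orthogonalGroup_iff (Fin n) ℝ).mpr ha.1)

end SO

theorem isHaarLike_range_map_haarMeasure {G M : Type*} [Group G] [TopologicalSpace G]
    [IsTopologicalGroup G] [CompactSpace G] [SecondCountableTopology G] [MeasurableSpace G]
    [BorelSpace G] [Mul M] [MeasurableSpace M] [MeasurableMul M] (φ : G →ₙ* M)
    (hφ : Measurable φ) (hrange : MeasurableSet (Set.range φ)) :
    IsHaarLike (Set.range φ) ((Measure.haarMeasure ⊤).map φ) := by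
  let ν : Measure G := Measure.haarMeasure ⊤
  have hν : IsProbabilityMeasure ν :=
    ⟨by simpa using Measure.haarMeasure_self (K₀ := (⊤ : TopologicalSpace.PositiveCompacts G))⟩
  have hright (g : G) : ν.map (· * g) = ν := by
    have : IsProbabilityMeasure (ν.map (· * g)) :=
      Measure.isProbabilityMeasure_map (measurable_mul_const g).aemeasurable
    rw [Measure.haarMeasure_unique (ν.map (· * g)) ⊤]
    simp [ν]
  change IsHaarLike _ (ν.map φ)
  refine ⟨Measure.isProbabilityMeasure_map hφ.aemeasurable, ?_, ?_⟩
  · rw [Measure.map_apply hφ hrange.compl, Set.preimage_compl, Set.preimage_range,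
      Set.compl_univ, measure_empty]
  · rintro _ ⟨g, rfl⟩
    refine ⟨?_, ?_⟩
    · conv_rhs => rw [← map_mul_left_eq_self ν g]
      rw [Measure.map_map (measurable_const_mul _) hφ, Measure.map_map hφ (measurable_const_mul g)]
      simp [Function.comp_def]
    · conv_rhs => rw [← hright g]
      rw [Measure.map_map (measurable_mul_const _) hφ, Measure.map_map hφ (measurable_mul_const g)]
      simp [Function.comp_def]

theorem isHaarLike_haarLike_SO (n : ℕ) : IsHaarLike (SO n) (haarLike (SO n)) := by
  suffices h : ∃ μ, IsHaarLike (SO n) μ by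
    rw [haarLike, dif_pos h]
    exact h.choose_spec
  let G := specialOrthogonalGroup (Fin n) ℝ
  have : ContinuousInv G :=
    ⟨Continuous.subtype_mk (continuous_subtype_val (p := (· ∈ G))).matrix_transpose _⟩
  have : IsTopologicalGroup G := {}
  have : CompactSpace G := isCompact_iff_compactSpace.mp <| by
    rw [SO.coe_specialOrthogonalGroup]
    exact SO.isCompact n
  have : SecondCountableTopology G :=
    inferInstanceAs (SecondCountableTopology {x // x ∈ (G : Set (Matrix (Fin n) (Fin n) ℝ))})
  have : BorelSpace G := Subtype.borelSpace _
  let φ : G →ₙ* Matrix (Fin n) (Fin n) ℝ := G.subtype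
  have hrange : Set.range φ = SO n :=
    Subtype.range_coe.trans (SO.coe_specialOrthogonalGroup n)
  refine ⟨(Measure.haarMeasure (⊤ : TopologicalSpace.PositiveCompacts G)).map φ, ?_⟩
  rw [← hrange]
  exact isHaarLike_range_map_haarMeasure φ measurable_subtype_coe
    (hrange ▸ SO.measurableSet n)

/-! ### Borel right inverses -/

theorem exists_measurable_rightInverse_of_isClosedEmbedding {X Y : Type*} [TopologicalSpace X]
    [CompactSpace X] [MeasurableSpace X] [BorelSpace X] [TopologicalSpace Y] [T2Space Y]
    [MeasurableSpace Y] [OpensMeasurableSpace Y] {e : X → ℝ} (he : IsClosedEmbedding e)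
    {f : X → Y} (hf : Continuous f) (hsurj : Function.Surjective f) :
    ∃ s : Y → X, Measurable s ∧ Function.RightInverse s f := by
  have hmin (y : Y) : ∃ x, f x = y ∧ ∀ x', f x' = y → e x ≤ e x' :=
    (isClosed_singleton.preimage hf).isCompact.exists_isMinOn (hsurj y) he.continuous.continuousOn
  choose s hs hs_min using hmin
  refine ⟨s, he.measurableEmbedding.measurable_comp_iff.mp (measurable_of_Iic fun c => ?_), hs⟩
  have hpre : (e ∘ s) ⁻¹' Set.Iic c = f '' (e ⁻¹' Set.Iic c) := by
    ext y
    exact ⟨fun hy => ⟨s y, hy, hs y⟩, fun ⟨x, hx, hxy⟩ => (hs_min y x hxy).trans hx⟩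
  rw [hpre]
  exact ((isClosed_Iic.preimage he.continuous).isCompact.image hf).measurableSet

-- A compact metrizable space is a continuous image of the Cantor set, whose points can be compared
-- as real numbers: choose the smallest point of each fibre.
theorem exists_measurable_rightInverse {X Y : Type*} [TopologicalSpace X] [CompactSpace X]
    [TopologicalSpace.MetrizableSpace X] [MeasurableSpace X] [BorelSpace X] [TopologicalSpace Y]
    [T2Space Y] [MeasurableSpace Y] [OpensMeasurableSpace Y] {f : X → Y} (hf : Continuous f)
    (hsurj : Function.Surjective f) :
    ∃ s : Y → X, Measurable s ∧ Function.RightInverse s f := by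
  rcases isEmpty_or_nonempty Y with hY | ⟨⟨y⟩⟩
  · exact ⟨isEmptyElim, measurable_of_empty _, isEmptyElim⟩
  have : Nonempty X := ⟨(hsurj y).choose⟩
  let := TopologicalSpace.metrizableSpaceMetric X
  obtain ⟨g, hg, hg_surj⟩ := exists_nat_bool_continuous_surjective_of_compact X
  let e (b : ℕ → Bool) : ℝ := cantorSetHomeomorphNatToBool.symm b
  have he : IsClosedEmbedding e := by
    refine Continuous.isClosedEmbedding
      (continuous_subtype_val.comp cantorSetHomeomorphNatToBool.symm.continuous) ?_
    exact Subtype.val_injective.comp cantorSetHomeomorphNatToBool.symm.injective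
  obtain ⟨s, hs, hsf⟩ := exists_measurable_rightInverse_of_isClosedEmbedding he (hf.comp hg)
    (hsurj.comp hg_surj)
  exact ⟨g ∘ s, hg.measurable.comp hs, hsf⟩

/-! ### Matrix calculus -/

theorem hasDerivAt_matrix {m n : Type*} [Finite m] [Finite n] {X : ℝ → Matrix m n ℝ}
    {X' : Matrix m n ℝ} {s : ℝ} :
    HasDerivAt X X' s ↔ ∀ i j, HasDerivAt (fun u => X u i j) (X' i j) s := by
  have := Fintype.ofFinite m
  have := Fintype.ofFinite n
  exact (hasDerivAt_pi (φ := X) (φ' := X')).trans <| forall_congr' fun i =>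
    hasDerivAt_pi (φ := fun u => X u i) (φ' := X' i)

theorem hasDerivAt_matrix_const {m n : Type*} [Finite m] [Finite n] (C : Matrix m n ℝ) (s : ℝ) :
    HasDerivAt (fun _ => C) 0 s :=
  hasDerivAt_matrix.mpr fun _ _ => hasDerivAt_const _ _

theorem continuous_of_hasDerivAt_matrix {m n : Type*} [Finite m] [Finite n]
    {X X' : ℝ → Matrix m n ℝ} (h : ∀ s, HasDerivAt X (X' s) s) : Continuous X :=
  continuous_matrix fun i j =>
    continuous_iff_continuousAt.mpr fun s => (hasDerivAt_matrix.mp (h s) i j).continuousAt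

theorem hasDerivAt_matrix_transpose {m n : Type*} [Finite m] [Finite n] {X : ℝ → Matrix m n ℝ}
    {X' : Matrix m n ℝ} {s : ℝ} (hX : HasDerivAt X X' s) : HasDerivAt (fun u => (X u)ᵀ) X'ᵀ s :=
  hasDerivAt_matrix.mpr fun i j => hasDerivAt_matrix.mp hX j i

theorem eq_of_hasDerivAt_matrix_eq_zero {m n : Type*} [Finite m] [Finite n]
    {X : ℝ → Matrix m n ℝ} (h : ∀ s, HasDerivAt X 0 s) (s u : ℝ) : X s = X u := by
  ext i j
  have hij (r : ℝ) : HasDerivAt (fun r => X r i j) 0 r := hasDerivAt_matrix.mp (h r) i j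
  exact is_const_of_deriv_eq_zero (fun r => (hij r).differentiableAt) (fun r => (hij r).deriv) s u

section MatrixCalculus

variable {ι : Type*} [Fintype ι]

theorem hasDerivAt_matrix_mul {X Y : ℝ → Matrix ι ι ℝ} {X' Y' : Matrix ι ι ℝ} {s : ℝ}
    (hX : HasDerivAt X X' s) (hY : HasDerivAt Y Y' s) :
    HasDerivAt (fun u => X u * Y u) (X' * Y s + X s * Y') s := by
  rw [hasDerivAt_matrix] at *
  intro i j
  simp only [Matrix.mul_apply, Matrix.add_apply, ← Finset.sum_add_distrib]
  exact HasDerivAt.fun_sum fun k _ => (hX i k).mul (hY k j)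

variable [DecidableEq ι]

-- The product topology on matrices is the topology of the Frobenius norm.
theorem hasDerivAt_matrix_exp_smul (A : Matrix ι ι ℝ) (s : ℝ) :
    HasDerivAt (fun u : ℝ => NormedSpace.exp (u • A)) (A * NormedSpace.exp (s • A)) s := by
  open scoped Matrix.Norms.Frobenius in
  exact hasDerivAt_exp_smul_const' A s

theorem continuous_matrix_exp : Continuous (NormedSpace.exp : Matrix ι ι ℝ → Matrix ι ι ℝ) := by
  open scoped Matrix.Norms.Frobenius in
  exact NormedSpace.exp_continuous

end MatrixCalculus

/-! ### The Hilbert–Schmidt norm -/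

/-- The squared Hilbert–Schmidt norm `‖A‖_hs² = Tr(AᵀA)` of a real matrix. -/
def hsNormSq {m n : Type*} [Fintype m] [Fintype n] (A : Matrix m n ℝ) : ℝ := trace (Aᵀ * A)

section HsNormSq

variable {m n : Type*} [Fintype m] [Fintype n]

theorem hsNormSq_eq_sum (A : Matrix m n ℝ) : hsNormSq A = ∑ i, ∑ j, A i j ^ 2 := by
  rw [hsNormSq, Finset.sum_comm]
  simp [trace, Matrix.mul_apply, sq]

theorem hsNormSq_nonneg (A : Matrix m n ℝ) : 0 ≤ hsNormSq A := by
  rw [hsNormSq_eq_sum]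
  positivity

theorem hsNormSq_transpose (A : Matrix m n ℝ) : hsNormSq Aᵀ = hsNormSq A := by
  rw [hsNormSq, hsNormSq, transpose_transpose, trace_mul_comm]

theorem continuous_hsNormSq : Continuous (hsNormSq : Matrix m n ℝ → ℝ) :=
  (continuous_id.matrix_transpose.matrix_mul continuous_id).matrix_trace

theorem sq_apply_le_hsNormSq (A : Matrix m n ℝ) (i : m) (j : n) : A i j ^ 2 ≤ hsNormSq A := by
  rw [hsNormSq_eq_sum]
  calc A i j ^ 2 ≤ ∑ l, A i l ^ 2 :=
        Finset.single_le_sum (fun l _ => sq_nonneg (A i l)) (Finset.mem_univ j)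
    _ ≤ ∑ k, ∑ l, A k l ^ 2 :=
        Finset.single_le_sum (f := fun k => ∑ l, A k l ^ 2)
          (fun k _ => Finset.sum_nonneg fun l _ => sq_nonneg _) (Finset.mem_univ i)

theorem isCompact_setOf_hsNormSq_le (C : ℝ) : IsCompact {A : Matrix m n ℝ | hsNormSq A ≤ C} :=
  isCompact_of_isClosed_of_abs_apply_le (isClosed_le continuous_hsNormSq continuous_const)
    fun _ hA i j => Real.abs_le_sqrt ((sq_apply_le_hsNormSq _ i j).trans hA)

theorem hsNormSq_of_transpose_eq_neg {A : Matrix m m ℝ} (hA : Aᵀ = -A) :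
    hsNormSq A = -trace (A * A) := by
  rw [hsNormSq, hA, neg_mul, trace_neg]

theorem frobenius_norm_eq_sqrt_hsNormSq (A : Matrix m n ℝ) :
    open scoped Matrix.Norms.Frobenius in ‖A‖ = √(hsNormSq A) := by
  simp [frobenius_norm_def, hsNormSq_eq_sum, Real.sqrt_eq_rpow]

variable [DecidableEq m]

theorem hsNormSq_mul_left_of_orthogonal {R : Matrix m m ℝ} (hR : Rᵀ * R = 1) (A : Matrix m n ℝ) :
    hsNormSq (R * A) = hsNormSq A := by
  rw [hsNormSq, hsNormSq, transpose_mul, Matrix.mul_assoc, ← Matrix.mul_assoc Rᵀ, hR,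
    Matrix.one_mul]

theorem hsNormSq_mul_right_of_orthogonal {R : Matrix m m ℝ} (hR : R * Rᵀ = 1)
    (A : Matrix n m ℝ) : hsNormSq (A * R) = hsNormSq A := by
  rw [← hsNormSq_transpose, transpose_mul,
    hsNormSq_mul_left_of_orthogonal (by rwa [transpose_transpose]), hsNormSq_transpose]

theorem hsNormSq_conj_of_orthogonal {R : Matrix m m ℝ} (hR : R * Rᵀ = 1) (A : Matrix m m ℝ) :
    hsNormSq (R * A * Rᵀ) = hsNormSq A := by
  have hR' : Rᵀ * R = 1 := mul_eq_one_comm.mp hR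
  rw [hsNormSq_mul_right_of_orthogonal (by rwa [transpose_transpose]),
    hsNormSq_mul_left_of_orthogonal hR']

end HsNormSq

/-! ### Curves in `SO(n)` -/

/-- `X : ℝ → SO(n)` is a differentiable curve with continuous logarithmic derivative `A`, i.e.
`X' = A X`. Its speed for the Hilbert–Schmidt norm is `‖A‖_hs`. -/
structure IsSOCurve {n : ℕ} (X A : ℝ → Matrix (Fin n) (Fin n) ℝ) : Prop where
  mem_SO : ∀ s, X s ∈ SO n
  continuous_logDeriv : Continuous A
  hasDerivAt : ∀ s, HasDerivAt X (A s * X s) s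

theorem det_eq_of_continuous_of_orthogonal {ι : Type*} [Fintype ι] [DecidableEq ι]
    {X : ℝ → Matrix ι ι ℝ} (hX : Continuous X) (h : ∀ s, X s * (X s)ᵀ = 1) (a b : ℝ) :
    (X a).det = (X b).det := by
  have hsq (s : ℝ) : (X s).det ^ 2 = 1 := by
    have := congrArg det (h s)
    rwa [det_mul, det_transpose, det_one, ← sq] at this
  have hb : (X b).det ≠ 0 := fun h0 => by simpa [h0] using hsq b
  exact isPreconnected_univ.eq_of_sq_eq (f := fun s => (X s).det) (g := fun _ => (X b).det)
    hX.matrix_det.continuousOn continuousOn_const (fun s _ => by simp [hsq])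
    (fun _ => hb) (Set.mem_univ b) rfl (Set.mem_univ a)

namespace IsSOCurve

variable {n : ℕ} {X Y A B : ℝ → Matrix (Fin n) (Fin n) ℝ}

theorem continuous (hX : IsSOCurve X A) : Continuous X :=
  continuous_of_hasDerivAt_matrix hX.hasDerivAt

theorem transpose_logDeriv (hX : IsSOCurve X A) (s : ℝ) : (A s)ᵀ = -A s := by
  have hXX (u : ℝ) : X u * (X u)ᵀ = 1 := (hX.mem_SO u).1
  have hd := hasDerivAt_matrix_mul (hX.hasDerivAt s) (hasDerivAt_matrix_transpose (hX.hasDerivAt s))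
  simp only [hXX, transpose_mul, Matrix.mul_assoc, Matrix.mul_one] at hd
  rw [← Matrix.mul_assoc, hXX, Matrix.one_mul] at hd
  rw [hasDerivAt_matrix] at hd
  ext i j
  have hij := (hd i j).unique (hasDerivAt_const s ((1 : Matrix (Fin n) (Fin n) ℝ) i j))
  exact eq_neg_of_add_eq_zero_right hij

theorem of_transpose_eq_neg (h0 : X 0 ∈ SO n) (hA : ∀ s, (A s)ᵀ = -A s) (hAc : Continuous A)
    (hX : ∀ s, HasDerivAt X (A s * X s) s) : IsSOCurve X A := by
  have hconst (s : ℝ) : HasDerivAt (fun u => (X u)ᵀ * X u) 0 s := by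
    convert hasDerivAt_matrix_mul (hasDerivAt_matrix_transpose (hX s)) (hX s) using 1
    simp [transpose_mul, hA, Matrix.mul_assoc]
  have horth (s : ℝ) : X s * (X s)ᵀ = 1 := mul_eq_one_comm.mp <|
    (eq_of_hasDerivAt_matrix_eq_zero hconst s 0).trans (SO.transpose_mul_self h0)
  have hdet (s : ℝ) : (X s).det = 1 := (det_eq_of_continuous_of_orthogonal
    (continuous_of_hasDerivAt_matrix hX) horth s 0).trans h0.2
  exact ⟨fun s => ⟨horth s, hdet s⟩, hAc, hX⟩

theorem eq_of_logDeriv_eq (hX : IsSOCurve X A) (hY : IsSOCurve Y A) (h0 : X 0 = Y 0) : X = Y := by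
  have hconst (s : ℝ) : HasDerivAt (fun u => (X u)ᵀ * Y u) 0 s := by
    convert hasDerivAt_matrix_mul (hasDerivAt_matrix_transpose (hX.hasDerivAt s))
      (hY.hasDerivAt s) using 1
    simp [transpose_mul, hX.transpose_logDeriv, Matrix.mul_assoc]
  funext s
  have h : (X s)ᵀ * Y s = 1 := by
    rw [eq_of_hasDerivAt_matrix_eq_zero hconst s 0, ← h0, SO.transpose_mul_self (hX.mem_SO 0)]
  calc X s = X s * ((X s)ᵀ * Y s) := by rw [h, Matrix.mul_one]
    _ = Y s := by rw [← Matrix.mul_assoc, (hX.mem_SO s).1, Matrix.one_mul]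

theorem mul_const (hX : IsSOCurve X A) {g : Matrix (Fin n) (Fin n) ℝ} (hg : g ∈ SO n) :
    IsSOCurve (fun s => X s * g) A where
  mem_SO s := SO.mul_mem (hX.mem_SO s) hg
  continuous_logDeriv := hX.continuous_logDeriv
  hasDerivAt s := by
    simpa [Matrix.mul_assoc] using
      hasDerivAt_matrix_mul (hX.hasDerivAt s) (hasDerivAt_matrix_const g s)

theorem mul (hX : IsSOCurve X A) (hY : IsSOCurve Y B) :
    IsSOCurve (fun s => X s * Y s) (fun s => A s + X s * B s * (X s)ᵀ) where
  mem_SO s := SO.mul_mem (hX.mem_SO s) (hY.mem_SO s)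
  continuous_logDeriv := hX.continuous_logDeriv.add
    ((hX.continuous.matrix_mul hY.continuous_logDeriv).matrix_mul hX.continuous.matrix_transpose)
  hasDerivAt s := by
    convert hasDerivAt_matrix_mul (hX.hasDerivAt s) (hY.hasDerivAt s) using 1
    rw [Matrix.add_mul, Matrix.mul_assoc (X s * B s), ← Matrix.mul_assoc (X s)ᵀ,
      SO.transpose_mul_self (hX.mem_SO s), Matrix.one_mul, Matrix.mul_assoc (X s),
      Matrix.mul_assoc (A s)]

theorem comp (hX : IsSOCurve X A) {φ φ' : ℝ → ℝ} (hφ : ∀ s, HasDerivAt φ (φ' s) s)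
    (hφ' : Continuous φ') : IsSOCurve (fun s => X (φ s)) (fun s => φ' s • A (φ s)) where
  mem_SO s := hX.mem_SO (φ s)
  continuous_logDeriv := hφ'.smul <| hX.continuous_logDeriv.comp <|
    continuous_iff_continuousAt.mpr fun s => (hφ s).continuousAt
  hasDerivAt s := by
    rw [smul_mul, hasDerivAt_matrix]
    intro i j
    exact ((hasDerivAt_matrix.mp (hX.hasDerivAt (φ s)) i j).comp s (hφ s)).congr_deriv
      (by simp [mul_comm])

end IsSOCurve

theorem isSOCurve_exp_smul {n : ℕ} {A : Matrix (Fin n) (Fin n) ℝ} (hA : Aᵀ = -A) :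
    IsSOCurve (fun s : ℝ => NormedSpace.exp (s • A)) (fun _ => A) :=
  .of_transpose_eq_neg (by simpa using SO.one_mem n) (fun _ => hA) continuous_const
    (hasDerivAt_matrix_exp_smul A)

/-! ### Length and energy -/

/-- The energy `∫₀¹ ‖A s‖² ds` of a curve in `SO n` with logarithmic derivative `A`. -/
def energy {n : ℕ} (A : ℝ → Matrix (Fin n) (Fin n) ℝ) : ℝ≥0∞ :=
  ∫⁻ s in Set.Ioc (0 : ℝ) 1, ENNReal.ofReal (hsNormSq (A s))

theorem sum_lintegral_Ioc_eq {k : ℕ} {t : Fin (k + 1) → ℝ} (ht : Monotone t) (v : ℝ → ℝ≥0∞) :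
    ∑ i : Fin k, ∫⁻ s in Set.Ioc (t i.castSucc) (t i.succ), v s =
      ∫⁻ s in Set.Ioc (t 0) (t (Fin.last k)), v s := by
  induction k with
  | zero => simp
  | succ k ih =>
    have hinit := ih (t := fun i => t i.castSucc) (ht.comp Fin.strictMono_castSucc.monotone)
    simp only [Fin.castSucc_zero] at hinit ⊢
    rw [Fin.sum_univ_castSucc]
    simp only [Fin.succ_castSucc, hinit, Fin.succ_last]
    rw [← lintegral_union measurableSet_Ioc (Set.Ioc_disjoint_Ioc_of_le le_rfl),
      Set.Ioc_union_Ioc_eq_Ioc (ht (Fin.zero_le _)) (ht (Fin.le_last _))]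

theorem pathLengthE_le_lintegral {X : Type*} {d : X → X → ℝ≥0∞} {γ : ℝ → X} {v : ℝ → ℝ≥0∞}
    (h : ∀ a b, a ≤ b → d (γ a) (γ b) ≤ ∫⁻ s in Set.Ioc a b, v s) :
    pathLengthE d γ ≤ ∫⁻ s in Set.Ioc 0 1, v s := by
  refine iSup_le fun k => iSup_le fun t => iSup_le fun ht => iSup_le fun h0 => iSup_le fun h1 => ?_
  rw [← h0, ← h1, ← sum_lintegral_Ioc_eq ht]
  exact Finset.sum_le_sum fun i _ => h _ _ (ht i.castSucc_le_succ)

namespace IsSOCurve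

variable {n : ℕ} {X A : ℝ → Matrix (Fin n) (Fin n) ℝ}

theorem hsDist_le_lintegral (hX : IsSOCurve X A) {a b : ℝ} (hab : a ≤ b) :
    hsDist (X a) (X b) ≤ ∫⁻ s in Set.Ioc a b, ENNReal.ofReal √(hsNormSq (A s)) := by
  open scoped Matrix.Norms.Frobenius in
  have hint : ∫ s in a..b, A s * X s = X b - X a :=
    intervalIntegral.integral_eq_sub_of_hasDerivAt (fun s _ => hX.hasDerivAt s)
      ((hX.continuous_logDeriv.matrix_mul hX.continuous).intervalIntegrable a b)
  have hspeed (s : ℝ) : ‖A s * X s‖ₑ = ENNReal.ofReal √(hsNormSq (A s)) := by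
    rw [← ofReal_norm, frobenius_norm_eq_sqrt_hsNormSq,
      hsNormSq_mul_right_of_orthogonal (hX.mem_SO s).1]
  calc hsDist (X a) (X b) = ‖X b - X a‖ₑ := by
        rw [← neg_sub, enorm_neg, ← ofReal_norm, frobenius_norm_eq_sqrt_hsNormSq]
        rfl
    _ ≤ ∫⁻ s in Set.Ioc a b, ‖A s * X s‖ₑ := by
        rw [← hint, intervalIntegral.integral_of_le hab]
        exact enorm_integral_le_lintegral_enorm _
    _ = ∫⁻ s in Set.Ioc a b, ENNReal.ofReal √(hsNormSq (A s)) := by simp only [hspeed]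

theorem DSO_le_lintegral (hX : IsSOCurve X A) :
    DSO n (X 0) (X 1) ≤ ∫⁻ s in Set.Ioc 0 1, ENNReal.ofReal √(hsNormSq (A s)) :=
  calc DSO n (X 0) (X 1) ≤ pathLengthE hsDist X :=
        iInf_le_of_le X <| iInf_le_of_le hX.continuous.continuousOn <|
          iInf_le_of_le (fun s _ => hX.mem_SO s) <| iInf_le_of_le rfl <| iInf_le_of_le rfl le_rfl
    _ ≤ ∫⁻ s in Set.Ioc 0 1, ENNReal.ofReal √(hsNormSq (A s)) :=
        pathLengthE_le_lintegral fun _ _ => hX.hsDist_le_lintegral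

theorem DSO_rpow_two_le_energy (hX : IsSOCurve X A) :
    DSO n (X 0) (X 1) ^ (2 : ℝ) ≤ energy A := by
  have : IsProbabilityMeasure (volume.restrict (Set.Ioc (0 : ℝ) 1)) := ⟨by simp⟩
  have hmeas : Continuous fun s => √(hsNormSq (A s)) :=
    (continuous_hsNormSq.comp hX.continuous_logDeriv).sqrt
  have hle := eLpNorm'_le_eLpNorm'_of_exponent_le one_pos one_le_two
    (volume.restrict (Set.Ioc (0 : ℝ) 1)) hmeas.aestronglyMeasurable
  have henorm (s : ℝ) : ‖√(hsNormSq (A s))‖ₑ = ENNReal.ofReal √(hsNormSq (A s)) :=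
    Real.enorm_of_nonneg (Real.sqrt_nonneg _)
  have hsq (s : ℝ) : ENNReal.ofReal √(hsNormSq (A s)) ^ (2 : ℝ) =
      ENNReal.ofReal (hsNormSq (A s)) := by
    rw [ENNReal.ofReal_rpow_of_nonneg (Real.sqrt_nonneg _) zero_le_two, Real.rpow_two,
      Real.sq_sqrt (hsNormSq_nonneg _)]
  simp only [eLpNorm', henorm, hsq, ENNReal.rpow_one, div_one] at hle
  exact (ENNReal.le_rpow_inv_iff two_pos).mp
    (by simpa [energy] using hX.DSO_le_lintegral.trans hle)

end IsSOCurve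

/-! ### Skew-symmetric matrices -/

section Skew

variable {ι : Type*} [Fintype ι] [DecidableEq ι]

theorem commute_diagonal_iff {d : ι → ℝ} {M : Matrix ι ι ℝ} :
    Commute (diagonal d) M ↔ ∀ k l, M k l ≠ 0 → d k = d l := by
  simp only [commute_iff_eq, ← Matrix.ext_iff, diagonal_mul, mul_diagonal]
  refine forall₂_congr fun k l => ?_
  rw [mul_comm, mul_eq_mul_left_iff, or_comm, or_iff_not_imp_left]

theorem commute_diagonal_comp {d : ι → ℝ} {M : Matrix ι ι ℝ} (h : Commute (diagonal d) M)
    (f : ℝ → ℝ) : Commute (diagonal (f ∘ d)) M :=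
  commute_diagonal_iff.mpr fun k l hkl => congrArg f (commute_diagonal_iff.mp h k l hkl)

theorem transpose_diagonal_mul_of_commute {d : ι → ℝ} {M : Matrix ι ι ℝ}
    (h : Commute (diagonal d) M) (hM : Mᵀ = -M) : (diagonal d * M)ᵀ = -(diagonal d * M) := by
  rw [transpose_mul, diagonal_transpose, hM, Matrix.neg_mul, h.eq]

theorem sum_sq_apply_of_mul_self_eq_neg_diagonal {M : Matrix ι ι ℝ} {d : ι → ℝ} (hM : Mᵀ = -M)
    (hMM : M * M = -diagonal d) (k : ι) : ∑ l, M k l ^ 2 = d k := by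
  have h : (M * Mᵀ) k k = d k := by simp [hM, hMM]
  simpa [Matrix.mul_apply, sq] using h

theorem apply_eq_zero_of_mul_self_eq_neg_diagonal {M : Matrix ι ι ℝ} {d : ι → ℝ} (hM : Mᵀ = -M)
    (hMM : M * M = -diagonal d) {k : ι} (hk : d k = 0) (l : ι) : M k l = 0 := by
  have h := sum_sq_apply_of_mul_self_eq_neg_diagonal hM hMM k
  rw [hk, Finset.sum_eq_zero_iff_of_nonneg fun l _ => sq_nonneg _] at h
  exact pow_eq_zero_iff two_ne_zero |>.mp (h l (Finset.mem_univ l))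

theorem apply_eq_zero_of_mul_self_eq_neg_diagonal' {M : Matrix ι ι ℝ} {d : ι → ℝ} (hM : Mᵀ = -M)
    (hMM : M * M = -diagonal d) {l : ι} (hl : d l = 0) (k : ι) : M k l = 0 := by
  have h : M l k = -M k l := congrFun₂ hM k l
  rw [apply_eq_zero_of_mul_self_eq_neg_diagonal hM hMM hl, eq_comm, neg_eq_zero] at h
  exact h

theorem mul_eq_zero_of_mul_self_eq_neg_diagonal {M N : Matrix ι ι ℝ} {d e : ι → ℝ} (hM : Mᵀ = -M)
    (hN : Nᵀ = -N) (hMM : M * M = -diagonal d) (hNN : N * N = -diagonal e)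
    (hde : ∀ k, d k * e k = 0) : M * N = 0 := by
  ext k l
  refine Finset.sum_eq_zero fun m _ => ?_
  rcases mul_eq_zero.mp (hde m) with hm | hm
  · exact mul_eq_zero_of_left (apply_eq_zero_of_mul_self_eq_neg_diagonal' hM hMM hm k) _
  · exact mul_eq_zero_of_right _ (apply_eq_zero_of_mul_self_eq_neg_diagonal hN hNN hm l)

theorem det_diagonal_add_ne_zero {d : ι → ℝ} (hd : ∀ k, 0 < d k) {T : Matrix ι ι ℝ}
    (hT : Tᵀ = -T) : (diagonal d + T).det ≠ 0 := by
  intro hdet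
  obtain ⟨v, hv, hmul⟩ := exists_mulVec_eq_zero_iff.mpr hdet
  have hskew : v ⬝ᵥ T *ᵥ v = 0 := by
    have h : v ⬝ᵥ T *ᵥ v = -(v ⬝ᵥ T *ᵥ v) := by
      conv_lhs => rw [dotProduct_mulVec, ← mulVec_transpose, hT, neg_mulVec, neg_dotProduct,
        dotProduct_comm]
    linarith
  have hsum : ∑ k, d k * v k ^ 2 = 0 :=
    calc ∑ k, d k * v k ^ 2 = v ⬝ᵥ (diagonal d + T) *ᵥ v := by
          rw [add_mulVec, dotProduct_add, hskew, add_zero]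
          simp only [dotProduct, mulVec_diagonal]
          exact Finset.sum_congr rfl fun k _ => by ring
      _ = 0 := by rw [hmul, dotProduct_zero]
  refine hv (funext fun k => ?_)
  rw [Finset.sum_eq_zero_iff_of_nonneg fun k _ => mul_nonneg (hd k).le (sq_nonneg _)] at hsum
  simpa [(hd k).ne'] using hsum k (Finset.mem_univ k)

theorem det_eq_one_of_det_one_add_ne_zero {h : Matrix ι ι ℝ} (hh : h * hᵀ = 1)
    (hdet : (1 + h).det ≠ 0) : h.det = 1 := by
  refine mul_right_cancel₀ hdet ?_
  calc h.det * (1 + h).det = (h * (1 + h)ᵀ).det := by rw [det_mul, det_transpose]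
    _ = 1 * (1 + h).det := by rw [transpose_add, transpose_one, Matrix.mul_add, hh,
        Matrix.mul_one, add_comm, one_mul]

theorem exists_mul_self_eq_neg_diagonal_indicator (I : Finset ι) (hI : Even I.card) :
    ∃ J : Matrix ι ι ℝ, Jᵀ = -J ∧ J * J = -diagonal (fun k => if k ∈ I then 1 else 0) := by
  obtain ⟨m, hm⟩ := hI
  have e : I ≃ Fin m ⊕ Fin m := Fintype.equivOfCardEq (by simp [hm])
  let J₀ := Matrix.J (Fin m) ℝ
  let P : Matrix ι (Fin m ⊕ Fin m) ℝ := of fun k q => if k = (e.symm q : ι) then 1 else 0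
  have hPP : Pᵀ * P = 1 := by
    ext q r
    simp [P, Matrix.mul_apply, Matrix.one_apply, Subtype.ext_iff.symm, eq_comm]
  have hPP' : P * Pᵀ = diagonal (fun k => if k ∈ I then 1 else 0) := by
    ext k l
    simp only [P, Matrix.mul_apply, transpose_apply, of_apply, diagonal_apply, ite_mul, one_mul,
      zero_mul]
    rw [← e.sum_comp]
    simp only [Equiv.symm_apply_apply]
    rw [Finset.sum_coe_sort I (fun x => if k = x then if l = x then (1 : ℝ) else 0 else 0),
      Finset.sum_ite_eq]
    by_cases hk : k ∈ I <;> simp [hk, eq_comm]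
  refine ⟨P * J₀ * Pᵀ, ?_, ?_⟩
  · simp [J₀, J_transpose, transpose_mul, Matrix.mul_assoc]
  · calc P * J₀ * Pᵀ * (P * J₀ * Pᵀ) = P * (J₀ * (Pᵀ * P) * J₀) * Pᵀ := by
          simp only [Matrix.mul_assoc]
      _ = -diagonal (fun k => if k ∈ I then 1 else 0) := by
          rw [hPP, Matrix.mul_one, J_squared, ← hPP']
          simp

end Skew

/-! ### Logarithms in `SO(n)` -/

section Rotation

variable {n : ℕ} {α : Fin n → ℝ} {L : Matrix (Fin n) (Fin n) ℝ}

-- Where `α` does not vanish, `L` is a complex structure `J`, and the curve is `cos(sα) + sin(sα)J`.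
theorem isSOCurve_cos_add_sin_mul (hL : Lᵀ = -L) (hαL : Commute (diagonal α) L)
    (hLL : diagonal α * (L * L) = -diagonal α) :
    IsSOCurve (fun s => diagonal (fun k => Real.cos (s * α k)) +
      diagonal (fun k => Real.sin (s * α k)) * L) (fun _ => diagonal α * L) := by
  refine .of_transpose_eq_neg (by simpa using SO.one_mem n)
    (fun _ => transpose_diagonal_mul_of_commute hαL hL) continuous_const fun s => ?_
  have hcos : Commute (diagonal fun k => Real.cos (s * α k)) L :=
    commute_diagonal_comp hαL fun x => Real.cos (s * x)
  have hsin : Commute (diagonal fun k => Real.sin (s * α k)) L :=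
    commute_diagonal_comp hαL fun x => Real.sin (s * x)
  have hderiv : diagonal α * L * (diagonal (fun k => Real.cos (s * α k)) +
      diagonal (fun k => Real.sin (s * α k)) * L) =
      diagonal (fun k => -(Real.sin (s * α k) * α k)) +
        diagonal (fun k => Real.cos (s * α k) * α k) * L := by
    calc _ = diagonal α * (L * diagonal fun k => Real.cos (s * α k)) +
          diagonal α * (L * diagonal fun k => Real.sin (s * α k)) * L := by noncomm_ring
      _ = diagonal (fun k => Real.cos (s * α k) * α k) * L +
          diagonal (fun k => Real.sin (s * α k)) * (diagonal α * (L * L)) := by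
        rw [← hcos.eq, ← hsin.eq]
        simp only [← Matrix.mul_assoc, diagonal_mul_diagonal, mul_comm]
      _ = _ := by rw [hLL, Matrix.mul_neg, diagonal_mul_diagonal, diagonal_neg, add_comm]
  rw [hderiv, hasDerivAt_matrix]
  intro i j
  have hs : HasDerivAt (fun u => u * α i) (α i) s := hasDerivAt_mul_const (α i)
  simp only [Matrix.add_apply, diagonal_mul]
  refine .add ?_ (hs.sin.mul_const _)
  rcases eq_or_ne i j with rfl | hij
  · simpa using hs.cos
  · simpa [hij] using hasDerivAt_const s (0 : ℝ)

theorem exp_diagonal_mul (hL : Lᵀ = -L) (hαL : Commute (diagonal α) L)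
    (hLL : diagonal α * (L * L) = -diagonal α) :
    NormedSpace.exp (diagonal α * L) =
      diagonal (fun k => Real.cos (α k)) + diagonal (fun k => Real.sin (α k)) * L := by
  have h := (isSOCurve_exp_smul (transpose_diagonal_mul_of_commute hαL hL)).eq_of_logDeriv_eq
    (isSOCurve_cos_add_sin_mul hL hαL hLL) (by simp)
  simpa using congrFun h 1

theorem hsNormSq_diagonal_mul (hL : Lᵀ = -L) (hαL : Commute (diagonal α) L)
    (hLL : diagonal α * (L * L) = -diagonal α) : hsNormSq (diagonal α * L) = ∑ k, α k ^ 2 := by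
  have h : diagonal α * L * (diagonal α * L) = -diagonal fun k => α k * α k :=
    calc diagonal α * L * (diagonal α * L) = diagonal α * (L * diagonal α * L) := by
          simp only [Matrix.mul_assoc]
      _ = -diagonal fun k => α k * α k := by
          rw [← hαL.eq, Matrix.mul_assoc, hLL, Matrix.mul_neg, diagonal_mul_diagonal]
  rw [hsNormSq_of_transpose_eq_neg (transpose_diagonal_mul_of_commute hαL hL), h]
  simp [sq]

end Rotation

theorem inv_sqrt_mul_self_mul_add_indicator {x : ℝ} (hx : x ^ 2 ≤ 1) :
    (√(1 - x ^ 2))⁻¹ * (√(1 - x ^ 2))⁻¹ * (1 - x ^ 2) + (if x = -1 then 1 else 0) =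
      if x = 1 then 0 else 1 := by
  rw [← mul_inv, Real.mul_self_sqrt (sub_nonneg.mpr hx)]
  by_cases h : 1 - x ^ 2 = 0
  · rcases sq_eq_one_iff.mp (sub_eq_zero.mp h).symm with rfl | rfl <;>
      norm_num
  · have h₁ : x ≠ 1 := by
      rintro rfl
      simp at h
    have h₂ : x ≠ -1 := by
      rintro rfl
      simp at h
    simp [h, h₁, h₂]

section DiagonalSymmetricPart

variable {n : ℕ} {c : Fin n → ℝ} {T : Matrix (Fin n) (Fin n) ℝ}

theorem commute_and_mul_self_of_diagonal_add_mem_SO (hT : Tᵀ = -T) (hg : diagonal c + T ∈ SO n) :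
    Commute (diagonal c) T ∧ T * T = -diagonal fun k => 1 - c k ^ 2 := by
  have h₁ := SO.mul_transpose_self hg
  have h₂ := SO.transpose_mul_self hg
  rw [transpose_add, diagonal_transpose, hT, ← sub_eq_add_neg] at h₁ h₂
  have hcomm : Commute (diagonal c) T := by
    have h : (2 : ℝ) • (diagonal c * T - T * diagonal c) = 0 := by
      rw [← sub_eq_zero.mpr (h₂.trans h₁.symm), two_smul]
      noncomm_ring
    exact sub_eq_zero.mp ((smul_eq_zero.mp h).resolve_left two_ne_zero)
  refine ⟨hcomm, ?_⟩
  have hsq : diagonal c * diagonal c - T * T = 1 := by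
    rw [← h₁, Matrix.add_mul, Matrix.mul_sub, Matrix.mul_sub, hcomm.eq]
    abel
  rw [← sub_eq_iff_eq_add'.mpr (sub_eq_iff_eq_add.mp hsq), diagonal_mul_diagonal, ← diagonal_one,
    diagonal_sub, diagonal_neg]
  simp [sq, neg_sub]

theorem sq_le_one_of_diagonal_add_mem_SO (hT : Tᵀ = -T) (hg : diagonal c + T ∈ SO n) (k : Fin n) :
    c k ^ 2 ≤ 1 := by
  rw [← sub_nonneg, ← sum_sq_apply_of_mul_self_eq_neg_diagonal hT
    (commute_and_mul_self_of_diagonal_add_mem_SO hT hg).2 k]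
  positivity

-- Flipping the signs of the coordinates with `c k = -1` leaves an orthogonal matrix with no
-- eigenvalue `-1`, hence of determinant `1`.
theorem even_card_filter_eq_neg_one (hT : Tᵀ = -T) (hg : diagonal c + T ∈ SO n) :
    Even (Finset.univ.filter fun k => c k = -1).card := by
  let e (k : Fin n) : ℝ := if c k = -1 then -1 else 1
  have hee : diagonal e * diagonal e = 1 := by
    rw [diagonal_mul_diagonal, ← diagonal_one]
    congr 1
    ext k
    by_cases hk : c k = -1 <;> simp [e, hk]
  have hTe : T * diagonal e = T := by
    ext k l
    by_cases hl : c l = -1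
    · have : T k l = 0 := apply_eq_zero_of_mul_self_eq_neg_diagonal' hT
        (commute_and_mul_self_of_diagonal_add_mem_SO hT hg).2 (by simp [hl]) k
      simp [this]
    · simp [e, hl]
  let h := (diagonal c + T) * diagonal e
  have hh : h = diagonal (fun k => c k * e k) + T := by
    simp only [h, Matrix.add_mul, diagonal_mul_diagonal, hTe]
  have horth : h * hᵀ = 1 := by
    rw [transpose_mul, diagonal_transpose, Matrix.mul_assoc, ← Matrix.mul_assoc (diagonal e), hee,
      Matrix.one_mul, SO.mul_transpose_self hg]
  have hpos (k : Fin n) : 0 < 1 + c k * e k := by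
    by_cases hk : c k = -1
    · simp [e, hk]
    · have hlt : -1 < c k :=
        (abs_le.mp (sq_le_one_iff_abs_le_one _ |>.mp
          (sq_le_one_of_diagonal_add_mem_SO hT hg k))).1.lt_of_ne' hk
      simp only [e, hk, if_false]
      linarith
  have hdet : h.det = 1 := det_eq_one_of_det_one_add_ne_zero horth <| by
    rw [hh, ← diagonal_one, ← add_assoc, diagonal_add]
    exact det_diagonal_add_ne_zero hpos hT
  rw [det_mul, hg.2, one_mul, det_diagonal, Finset.prod_ite, Finset.prod_const_one, mul_one,
    Finset.prod_const] at hdet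
  exact (neg_one_pow_eq_one_iff_even (by norm_num)).mp hdet

theorem exists_complexStructure_on_eigenspace_neg_one (hT : Tᵀ = -T)
    (hg : diagonal c + T ∈ SO n) :
    ∃ J : Matrix (Fin n) (Fin n) ℝ, Jᵀ = -J ∧ Commute (diagonal c) J ∧
      J * J = -diagonal (fun k => if c k = -1 then 1 else 0) ∧ J * T = 0 ∧ T * J = 0 := by
  obtain ⟨J, hJ, hJJ⟩ :=
    exists_mul_self_eq_neg_diagonal_indicator _ (even_card_filter_eq_neg_one hT hg)
  simp only [Finset.mem_filter_univ] at hJJ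
  have hJ_left (l : Fin n) {k : Fin n} (hk : c k ≠ -1) : J k l = 0 :=
    apply_eq_zero_of_mul_self_eq_neg_diagonal hJ hJJ (by simp [hk]) l
  have hJ_right (k : Fin n) {l : Fin n} (hl : c l ≠ -1) : J k l = 0 :=
    apply_eq_zero_of_mul_self_eq_neg_diagonal' hJ hJJ (by simp [hl]) k
  have hTT := (commute_and_mul_self_of_diagonal_add_mem_SO hT hg).2
  have hdisj (k : Fin n) : (if c k = -1 then 1 else 0) * (1 - c k ^ 2) = 0 := by
    split_ifs with hk <;> simp [hk]
  refine ⟨J, hJ, commute_diagonal_iff.mpr fun k l hkl => ?_, hJJ,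
    mul_eq_zero_of_mul_self_eq_neg_diagonal hJ hT hJJ hTT hdisj,
    mul_eq_zero_of_mul_self_eq_neg_diagonal hT hJ hTT hJJ fun k =>
      (mul_comm _ _).trans (hdisj k)⟩
  exact (not_imp_comm.mp (hJ_left l) hkl).trans (not_imp_comm.mp (hJ_right k) hkl).symm

-- `L` is the rotation generator `T / √(1 - c²)` away from the eigenvalues `±1`, together with any
-- complex structure `J` on the even-dimensional eigenspace of `-1`.
theorem exists_rotation_generator (hT : Tᵀ = -T) (hg : diagonal c + T ∈ SO n) :
    ∃ L : Matrix (Fin n) (Fin n) ℝ, Lᵀ = -L ∧ Commute (diagonal c) L ∧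
      L * L = -diagonal (fun k => if c k = 1 then 0 else 1) ∧
      diagonal (fun k => √(1 - c k ^ 2)) * L = T := by
  obtain ⟨hcT, hTT⟩ := commute_and_mul_self_of_diagonal_add_mem_SO hT hg
  obtain ⟨J, hJ, hcJ, hJJ, hJT, hTJ⟩ := exists_complexStructure_on_eigenspace_neg_one hT hg
  let r (x : ℝ) : ℝ := (√(1 - x ^ 2))⁻¹
  have hrT : Commute (diagonal (r ∘ c)) T := commute_diagonal_comp hcT r
  have hJrT : J * (diagonal (r ∘ c) * T) = 0 := by
    rw [hrT.eq, ← Matrix.mul_assoc, hJT, Matrix.zero_mul]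
  refine ⟨diagonal (r ∘ c) * T + J, ?_, ?_, ?_, ?_⟩
  · rw [transpose_add, transpose_diagonal_mul_of_commute hrT hT, hJ, neg_add]
  · exact ((commute_diagonal c _).mul_right hcT).add_right hcJ
  · calc _ = diagonal (r ∘ c) * (T * diagonal (r ∘ c)) * T + diagonal (r ∘ c) * (T * J) +
          J * (diagonal (r ∘ c) * T) + J * J := by noncomm_ring
      _ = diagonal (r ∘ c) * diagonal (r ∘ c) * (T * T) + J * J := by
        rw [hTJ, hJrT, ← hrT.eq]
        simp only [Matrix.mul_assoc, Matrix.mul_zero, add_zero]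
      _ = -diagonal (fun k => if c k = 1 then 0 else 1) := by
        rw [hTT, hJJ, Matrix.mul_neg, ← neg_add, diagonal_mul_diagonal, diagonal_mul_diagonal,
          diagonal_add]
        congr 2
        ext k
        exact inv_sqrt_mul_self_mul_add_indicator (sq_le_one_of_diagonal_add_mem_SO hT hg k)
  · ext k l
    rw [diagonal_mul, Matrix.add_apply, diagonal_mul, Function.comp_apply]
    by_cases hk : 1 - c k ^ 2 = 0
    · simp [hk, apply_eq_zero_of_mul_self_eq_neg_diagonal hT hTT hk]
    · have hJk : J k l = 0 := apply_eq_zero_of_mul_self_eq_neg_diagonal hJ hJJ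
        (if_neg fun h => hk (by simp [h])) l
      have hsqrt : √(1 - c k ^ 2) ≠ 0 := fun h => hk <|
        (Real.sqrt_eq_zero (sub_nonneg.mpr (sq_le_one_of_diagonal_add_mem_SO hT hg k))).mp h
      rw [hJk, add_zero, mul_inv_cancel_left₀ hsqrt]

theorem exists_log_of_diagonal_add_mem_SO (hT : Tᵀ = -T) (hg : diagonal c + T ∈ SO n) :
    ∃ A : Matrix (Fin n) (Fin n) ℝ, Aᵀ = -A ∧ hsNormSq A ≤ Real.pi ^ 2 * n ∧
      NormedSpace.exp A = diagonal c + T := by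
  obtain ⟨L, hL, hcL, hLL, hsin⟩ := exists_rotation_generator hT hg
  let α (k : Fin n) : ℝ := Real.arccos (c k)
  have hαL : Commute (diagonal α) L := commute_diagonal_comp hcL Real.arccos
  have hαLL : diagonal α * (L * L) = -diagonal α := by
    rw [hLL, Matrix.mul_neg, diagonal_mul_diagonal]
    congr 2
    ext k
    by_cases hk : c k = 1 <;> simp [α, hk]
  have hcos (k : Fin n) : Real.cos (α k) = c k :=
    have hk := abs_le.mp <| (sq_le_one_iff_abs_le_one _).mp <|
      sq_le_one_of_diagonal_add_mem_SO hT hg k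
    Real.cos_arccos hk.1 hk.2
  refine ⟨diagonal α * L, transpose_diagonal_mul_of_commute hαL hL, ?_, ?_⟩
  · calc hsNormSq (diagonal α * L) = ∑ k, α k ^ 2 := hsNormSq_diagonal_mul hL hαL hαLL
      _ ≤ ∑ _k : Fin n, Real.pi ^ 2 := Finset.sum_le_sum fun k _ =>
        pow_le_pow_left₀ (Real.arccos_nonneg _) (Real.arccos_le_pi _) 2
      _ = Real.pi ^ 2 * n := by simp [mul_comm]
  · simp only [exp_diagonal_mul hL hαL hαLL, hcos]
    simp only [α, Real.sin_arccos, hsin]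

end DiagonalSymmetricPart

theorem SO.conj_mem {n : ℕ} {g U : Matrix (Fin n) (Fin n) ℝ} (hg : g ∈ SO n) (hU : U * Uᵀ = 1) :
    U * g * Uᵀ ∈ SO n := by
  have hU' : Uᵀ * U = 1 := mul_eq_one_comm.mp hU
  refine ⟨?_, ?_⟩
  · calc U * g * Uᵀ * (U * g * Uᵀ)ᵀ = U * (g * (Uᵀ * U) * gᵀ) * Uᵀ := by
          simp only [transpose_mul, transpose_transpose, Matrix.mul_assoc]
      _ = 1 := by rw [hU', Matrix.mul_one, hg.1, Matrix.mul_one, hU]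
  · rw [det_mul_right_comm, hU, Matrix.one_mul, hg.2]

theorem exists_orthogonal_conj_eq_diagonal {ι : Type*} [Fintype ι] [DecidableEq ι]
    {S : Matrix ι ι ℝ} (hS : Sᵀ = S) :
    ∃ (U : Matrix ι ι ℝ) (c : ι → ℝ), U * Uᵀ = 1 ∧ U * diagonal c * Uᵀ = S := by
  have hS : S.IsHermitian := hS
  refine ⟨hS.eigenvectorUnitary, hS.eigenvalues,
    (mem_orthogonalGroup_iff ι ℝ).mp hS.eigenvectorUnitary.2, ?_⟩
  conv_rhs => rw [hS.spectral_theorem]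
  simp [Unitary.conjStarAlgAut_apply, star_eq_conjTranspose]

theorem exists_log_of_mem_SO {n : ℕ} {g : Matrix (Fin n) (Fin n) ℝ} (hg : g ∈ SO n) :
    ∃ A : Matrix (Fin n) (Fin n) ℝ, Aᵀ = -A ∧ hsNormSq A ≤ Real.pi ^ 2 * n ∧
      NormedSpace.exp A = g := by
  obtain ⟨U, c, hU, hS⟩ := exists_orthogonal_conj_eq_diagonal (S := (2 : ℝ)⁻¹ • (g + gᵀ))
    (by simp [transpose_add, add_comm])
  have hU' : Uᵀ * U = 1 := mul_eq_one_comm.mp hU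
  let T := Uᵀ * ((2 : ℝ)⁻¹ • (g - gᵀ)) * U
  have hT : Tᵀ = -T := by
    simp only [T, transpose_mul, transpose_transpose, transpose_smul, transpose_sub]
    rw [← neg_sub g gᵀ, smul_neg, Matrix.neg_mul, Matrix.mul_neg, Matrix.mul_assoc]
  have hgT : U * (diagonal c + T) * Uᵀ = g :=
    calc U * (diagonal c + T) * Uᵀ =
        U * diagonal c * Uᵀ + U * Uᵀ * ((2 : ℝ)⁻¹ • (g - gᵀ)) * (U * Uᵀ) := by
          simp only [T, Matrix.mul_add, Matrix.add_mul, Matrix.mul_assoc]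
      _ = g := by
          rw [hS, hU, Matrix.one_mul, Matrix.mul_one, ← smul_add, add_add_sub_cancel, ← two_smul ℝ,
            smul_smul, inv_mul_cancel₀ two_ne_zero, one_smul]
  have hmem : diagonal c + T ∈ SO n := by
    have h := SO.conj_mem hg (U := Uᵀ) (by rwa [transpose_transpose])
    rwa [← hgT, transpose_transpose, ← Matrix.mul_assoc, ← Matrix.mul_assoc, hU', Matrix.one_mul,
      Matrix.mul_assoc, hU', Matrix.mul_one] at h
  obtain ⟨A, hA, hA_le, hexp⟩ := exists_log_of_diagonal_add_mem_SO hT hmem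
  refine ⟨U * A * Uᵀ, ?_, (hsNormSq_conj_of_orthogonal hU A).trans_le hA_le, ?_⟩
  · simp [transpose_mul, hA, Matrix.mul_assoc]
  · rw [← inv_eq_right_inv hU, exp_conj _ _ (IsUnit.of_mul_eq_one _ hU), inv_eq_right_inv hU, hexp,
      hgT]

theorem exists_measurable_log (n : ℕ) :
    ∃ L : Matrix (Fin n) (Fin n) ℝ → Matrix (Fin n) (Fin n) ℝ, Measurable L ∧
      ∀ g ∈ SO n, (L g)ᵀ = -L g ∧ hsNormSq (L g) ≤ Real.pi ^ 2 * n ∧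
        NormedSpace.exp (L g) = g := by
  let K : Set (Matrix (Fin n) (Fin n) ℝ) := {A | hsNormSq A ≤ Real.pi ^ 2 * n} ∩ {A | Aᵀ = -A}
  have hK : IsCompact K := (isCompact_setOf_hsNormSq_le _).inter_right <|
    isClosed_eq continuous_id.matrix_transpose continuous_neg
  have : CompactSpace K := isCompact_iff_compactSpace.mp hK
  have : TopologicalSpace.MetrizableSpace (Matrix (Fin n) (Fin n) ℝ) :=
    inferInstanceAs (TopologicalSpace.MetrizableSpace (Fin n → Fin n → ℝ))
  have hexp (A : K) : NormedSpace.exp (A : Matrix (Fin n) (Fin n) ℝ) ∈ SO n := by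
    simpa using (isSOCurve_exp_smul A.2.2).mem_SO 1
  obtain ⟨l, hl, hl_exp⟩ := exists_measurable_rightInverse
    (f := fun A : K => (⟨_, hexp A⟩ : SO n))
    ((continuous_matrix_exp.comp continuous_subtype_val).subtype_mk _) (by
      rintro ⟨g, hg⟩
      obtain ⟨A, hA, hA_le, hAg⟩ := exists_log_of_mem_SO hg
      exact ⟨⟨A, hA_le, hA⟩, Subtype.ext hAg⟩)
  obtain ⟨L, hL, hLl⟩ := (MeasurableEmbedding.subtype_coe
    (SO.measurableSet n)).exists_measurable_extend (measurable_subtype_coe.comp hl) fun _ => ⟨0⟩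
  refine ⟨L, hL, fun g hg => ?_⟩
  have hLg : L g = l ⟨g, hg⟩ := congrFun hLl ⟨g, hg⟩
  rw [hLg]
  exact ⟨(l _).2.2, (l _).2.1, congrArg Subtype.val (hl_exp ⟨g, hg⟩)⟩

/-! ### Plane rotations and their generators -/

/-- The infinitesimal generator of the rotations `R(i,j,θ)`. -/
def kacGen {n : ℕ} (i j : Fin n) : Matrix (Fin n) (Fin n) ℝ := single j i 1 - single i j 1

section KacRot

variable {n : ℕ} {i j : Fin n}

theorem transpose_kacGen : (kacGen i j)ᵀ = -kacGen i j := by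
  simp [kacGen, transpose_sub]

theorem kacGen_apply_ne_zero {k l : Fin n} (h : kacGen i j k l ≠ 0) :
    (k = i ∨ k = j) ∧ (l = i ∨ l = j) := by
  contrapose! h
  simp only [kacGen, Matrix.sub_apply, single_apply]
  grind

theorem kacGen_mul_self (hij : i ≠ j) :
    kacGen i j * kacGen i j = -diagonal fun k => if k = i ∨ k = j then 1 else 0 := by
  simp only [kacGen, Matrix.sub_mul, Matrix.mul_sub, single_mul_single_same, mul_one,
    single_mul_single_of_ne _ _ _ _ hij, single_mul_single_of_ne _ _ _ _ hij.symm]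
  ext k l
  simp only [Matrix.sub_apply, Matrix.neg_apply, single_apply, diagonal_apply, Matrix.zero_apply]
  grind

theorem isSOCurve_kacRot (hij : i ≠ j) : IsSOCurve (kacRot i j) fun _ => kacGen i j := by
  let α (k : Fin n) : ℝ := if k = i ∨ k = j then 1 else 0
  have hαG : Commute (diagonal α) (kacGen i j) := commute_diagonal_iff.mpr fun k l hkl => by
    simp [α, kacGen_apply_ne_zero hkl]
  have hαGG : diagonal α * (kacGen i j * kacGen i j) = -diagonal α := by
    rw [kacGen_mul_self hij, Matrix.mul_neg, diagonal_mul_diagonal]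
    simp [α]
  have hα : diagonal α * kacGen i j = kacGen i j := by
    ext k l
    by_cases hkl : kacGen i j k l = 0
    · simp [hkl]
    · simp [α, kacGen_apply_ne_zero hkl]
  have h := isSOCurve_cos_add_sin_mul transpose_kacGen hαG hαGG
  rw [hα] at h
  convert h using 1
  ext θ k l
  simp only [kacRot, kacGen, of_apply, Matrix.add_apply, Matrix.sub_apply, diagonal_mul,
    diagonal_apply, single_apply, α]
  by_cases hk : k = i ∨ k = j
  · simp only [hk, if_true, mul_one]
    grind
  · simp only [hk, if_false, mul_zero, Real.cos_zero, Real.sin_zero]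
    grind

theorem kacRot_zero : kacRot i j 0 = 1 := by
  ext k l
  simp only [kacRot, of_apply, Real.cos_zero, Real.sin_zero, one_apply]
  grind

theorem kacRot_eq_exp (hij : i ≠ j) (θ : ℝ) : kacRot i j θ = NormedSpace.exp (θ • kacGen i j) :=
  congrFun ((isSOCurve_kacRot hij).eq_of_logDeriv_eq (isSOCurve_exp_smul transpose_kacGen)
    (by rw [kacRot_zero, zero_smul, NormedSpace.exp_zero])) θ

theorem commute_kacRot_kacGen (hij : i ≠ j) (θ : ℝ) : Commute (kacRot i j θ) (kacGen i j) := by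
  rw [kacRot_eq_exp hij]
  exact (((Commute.refl (kacGen i j)).smul_right θ).exp_right).symm

theorem periodic_kacRot : Function.Periodic (kacRot i j) (2 * Real.pi) := fun θ => by
  simp [kacRot]

theorem hsNormSq_sub_smul_kacGen (hij : i ≠ j) {A : Matrix (Fin n) (Fin n) ℝ} (hA : Aᵀ = -A) :
    hsNormSq (A - A j i • kacGen i j) = hsNormSq A - 2 * A j i ^ 2 := by
  have hAG (B : Matrix (Fin n) (Fin n) ℝ) : trace (B * kacGen i j) = B i j - B j i := by
    simp [kacGen, Matrix.mul_sub, trace_mul_single]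
  have hij' : A i j = -A j i := congrFun₂ hA j i
  have hGG : trace (kacGen i j * kacGen i j) = -2 := by
    rw [hAG]
    simp [kacGen, hij, hij.symm]
    norm_num
  have hskew : (A - A j i • kacGen i j)ᵀ = -(A - A j i • kacGen i j) := by
    rw [transpose_sub, transpose_smul, transpose_kacGen, hA, smul_neg, neg_sub, sub_neg_eq_add,
      neg_add_eq_sub]
  rw [hsNormSq_of_transpose_eq_neg hskew, hsNormSq_of_transpose_eq_neg hA]
  simp only [Matrix.sub_mul, Matrix.mul_sub, Matrix.smul_mul, Matrix.mul_smul, trace_sub,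
    trace_smul, hGG, trace_mul_comm (kacGen i j) A, hAG, hij', smul_eq_mul]
  ring

end KacRot

theorem sum_pairs_two_mul_sq_eq_hsNormSq {n : ℕ} {A : Matrix (Fin n) (Fin n) ℝ} (hA : Aᵀ = -A) :
    ∑ p ∈ pairs n, 2 * A p.2 p.1 ^ 2 = hsNormSq A := by
  let f (k l : Fin n) : ℝ := if k < l then A l k ^ 2 else 0
  have hf (k l : Fin n) : A k l ^ 2 = f k l + f l k := by
    have hkl : A k l = -A l k := congrFun₂ hA l k
    rcases lt_trichotomy k l with h | rfl | h
    · simp [f, h, h.asymm, hkl]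
    · simp [f, self_eq_neg.mp hkl]
    · simp [f, h, h.asymm]
  calc ∑ p ∈ pairs n, 2 * A p.2 p.1 ^ 2 = 2 * ∑ k, ∑ l, f k l := by
        rw [← Finset.mul_sum, pairs, Finset.sum_filter, Fintype.sum_prod_type]
    _ = ∑ k, ∑ l, (f k l + f l k) := by
        simp only [Finset.sum_add_distrib]
        rw [Finset.sum_comm (f := fun k l => f l k), two_mul]
    _ = hsNormSq A := by simp only [hsNormSq_eq_sum, hf]

theorem card_pairs (n : ℕ) : (pairs n).card = n.choose 2 := by
  simpa [pairs] using Fintype.card_product_filter_lt (α := Fin n)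

/-! ### Kac's kernel -/

theorem kernelIterate_succ_eq_bind {X : Type*} [MeasurableSpace X] (K : X → Measure X) (t : ℕ)
    (μ : Measure X) : kernelIterate K (t + 1) μ = kernelIterate K t (μ.bind K) := by
  induction t with
  | zero => rfl
  | succ t ih => rw [kernelIterate, ih, kernelIterate]

theorem kernelIterate_eq_self {X : Type*} [MeasurableSpace X] {K : X → Measure X} {μ : Measure X}
    (hμ : μ.bind K = μ) (t : ℕ) : kernelIterate K t μ = μ := by
  induction t with
  | zero => rfl
  | succ t ih => rw [kernelIterate, ih, hμ]

instance isProbabilityMeasure_uniformAngle : IsProbabilityMeasure uniformAngle := ⟨by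
  have h : ENNReal.ofReal (2 * Real.pi) ≠ 0 := by simp [Real.pi_pos]
  simp only [uniformAngle, Measure.smul_apply, Measure.restrict_apply_univ, Real.volume_Icc,
    sub_zero, smul_eq_mul]
  exact ENNReal.inv_mul_cancel h ENNReal.ofReal_ne_top⟩

theorem lintegral_uniformAngle_sub {f : ℝ → ℝ≥0∞} (hf : Function.Periodic f (2 * Real.pi))
    (c : ℝ) : ∫⁻ θ, f (θ - c) ∂uniformAngle = ∫⁻ θ, f θ ∂uniformAngle := by
  simp only [uniformAngle, lintegral_smul_measure, ← Measure.restrict_congr_set Ioc_ae_eq_Icc]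
  congr 1
  calc ∫⁻ θ in Set.Ioc 0 (2 * Real.pi), f (θ - c)
      = ∫⁻ θ in Set.Ioc (-c) (-c + 2 * Real.pi), f θ := by
        rw [← lintegral_indicator measurableSet_Ioc, ← lintegral_indicator measurableSet_Ioc,
          ← lintegral_sub_right_eq_self (Set.indicator (Set.Ioc (-c) _) f) c]
        refine lintegral_congr fun θ => ?_
        simp only [Set.indicator, Set.mem_Ioc, neg_lt_sub_iff_lt_add, sub_le_iff_le_add,
          neg_add_cancel_comm]
        congr 1
        ext
        constructor <;> rintro ⟨_, _⟩ <;> constructor <;> linarith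
    _ = ∫⁻ θ in Set.Ioc 0 (2 * Real.pi), f θ := by
        have hinv (g : AddSubgroup.zmultiples (2 * Real.pi)) (θ : ℝ) : f (g +ᵥ θ) = f θ := by
          obtain ⟨_, hg⟩ := g
          obtain ⟨k, rfl⟩ := AddSubgroup.mem_zmultiples_iff.mp hg
          exact (congrArg f (add_comm _ _)).trans (hf.zsmul k θ)
        have hdom := (isAddFundamentalDomain_Ioc Real.two_pi_pos (-c)).setLIntegral_eq
          (isAddFundamentalDomain_Ioc Real.two_pi_pos 0) f hinv
        rwa [zero_add] at hdom

/-- The law of the uniformly chosen pair of indices and of the uniform angle that determine one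
step of Kac's walk. -/
def moveLaw (n : ℕ) : Measure (pairs n × ℝ) :=
  ((n.choose 2 : ℝ≥0∞)⁻¹ • Measure.count).prod uniformAngle

/-- The rotation `R(i,j,θ)` as a function of `((i,j),θ)`. -/
def moveRot {n : ℕ} (z : pairs n × ℝ) : Matrix (Fin n) (Fin n) ℝ := kacRot z.1.1.1 z.1.1.2 z.2

section MoveLaw

variable {n : ℕ}

theorem fst_ne_snd_of_pairs (p : pairs n) : p.1.1 ≠ p.1.2 := (Finset.mem_filter.mp p.2).2.ne

theorem measurable_moveRot : Measurable (moveRot (n := n)) :=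
  measurable_from_prod_countable_right fun p =>
    (isSOCurve_kacRot (fst_ne_snd_of_pairs p)).continuous.measurable

theorem moveRot_mem_SO (z : pairs n × ℝ) : moveRot z ∈ SO n :=
  (isSOCurve_kacRot (fst_ne_snd_of_pairs z.1)).mem_SO z.2

instance sFinite_moveLaw : SFinite (moveLaw n) := by
  unfold moveLaw
  infer_instance

theorem lintegral_moveLaw {f : pairs n × ℝ → ℝ≥0∞} (hf : Measurable f) :
    ∫⁻ z, f z ∂moveLaw n =
      (n.choose 2 : ℝ≥0∞)⁻¹ * ∑ p, ∫⁻ θ, f (p, θ) ∂uniformAngle := by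
  rw [moveLaw, lintegral_prod _ hf.aemeasurable, lintegral_smul_measure, lintegral_count,
    tsum_fintype, smul_eq_mul]

theorem lintegral_moveLaw_fst (f : pairs n → ℝ≥0∞) :
    ∫⁻ z, f z.1 ∂moveLaw n = (n.choose 2 : ℝ≥0∞)⁻¹ * ∑ p, f p := by
  rw [lintegral_moveLaw (f := fun z => f z.1) ((measurable_of_countable f).comp measurable_fst)]
  simp only [lintegral_const, measure_univ, mul_one]

theorem isProbabilityMeasure_moveLaw (hn : 2 ≤ n) : IsProbabilityMeasure (moveLaw n) := ⟨by
  have hC : (n.choose 2 : ℝ≥0∞) ≠ 0 := by exact_mod_cast (Nat.choose_pos hn).ne'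
  rw [← lintegral_one, lintegral_moveLaw_fst fun _ => 1]
  simp only [Finset.sum_const, Finset.card_univ, Fintype.card_coe, card_pairs, nsmul_eq_mul,
    mul_one]
  exact ENNReal.inv_mul_cancel hC (ENNReal.natCast_ne_top _)⟩

theorem lintegral_moveLaw_sub {f : Matrix (Fin n) (Fin n) ℝ → ℝ≥0∞} (hf : Measurable f)
    (c : pairs n → ℝ) :
    ∫⁻ z, f (moveRot (z.1, z.2 - c z.1)) ∂moveLaw n = ∫⁻ z, f (moveRot z) ∂moveLaw n := by
  have hc : Measurable fun z : pairs n × ℝ => (z.1, z.2 - c z.1) :=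
    measurable_fst.prodMk
      (measurable_snd.sub ((measurable_of_countable c).comp measurable_fst))
  rw [lintegral_moveLaw (f := fun z => f (moveRot (z.1, z.2 - c z.1)))
      (hf.comp (measurable_moveRot.comp hc)),
    lintegral_moveLaw (f := fun z => f (moveRot z)) (hf.comp measurable_moveRot)]
  congr 1
  exact Finset.sum_congr rfl fun p _ => lintegral_uniformAngle_sub
    ((periodic_kacRot (i := p.1.1) (j := p.1.2)).comp f) (c p)

theorem lintegral_kacKernel {f : Matrix (Fin n) (Fin n) ℝ → ℝ≥0∞} (hf : Measurable f)
    (x : Matrix (Fin n) (Fin n) ℝ) :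
    ∫⁻ y, f y ∂kacKernel n x = ∫⁻ z, f (moveRot z * x) ∂moveLaw n := by
  rw [lintegral_moveLaw (f := fun z => f (moveRot z * x))
      (hf.comp (measurable_moveRot.mul_const x)),
    kacKernel, lintegral_smul_measure, lintegral_finsetSum_measure, smul_eq_mul,
    ← Finset.sum_coe_sort]
  congr 1
  exact Finset.sum_congr rfl fun p _ =>
    lintegral_map hf ((measurable_moveRot.comp measurable_prodMk_left).mul_const x)

theorem measurable_kacKernel : Measurable (kacKernel n) := by
  refine Measure.measurable_of_measurable_coe _ fun s hs => ?_
  simp only [← lintegral_indicator_one hs, lintegral_kacKernel (measurable_one.indicator hs)]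
  exact Measurable.lintegral_prod_right' (f := fun w => s.indicator 1 (moveRot w.2 * w.1))
    ((measurable_one.indicator hs).comp
      ((measurable_moveRot.comp measurable_snd).mul measurable_fst))

theorem lintegral_bind_kacKernel {f : Matrix (Fin n) (Fin n) ℝ → ℝ≥0∞} (hf : Measurable f)
    (μ : Measure (Matrix (Fin n) (Fin n) ℝ)) :
    ∫⁻ y, f y ∂μ.bind (kacKernel n) = ∫⁻ x, ∫⁻ z, f (moveRot z * x) ∂moveLaw n ∂μ := by
  rw [Measure.lintegral_bind measurable_kacKernel.aemeasurable hf.aemeasurable]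
  simp only [lintegral_kacKernel hf]

theorem bind_kacKernel_of_isHaarLike (hn : 2 ≤ n) {H : Measure (Matrix (Fin n) (Fin n) ℝ)}
    (hH : IsHaarLike (SO n) H) : H.bind (kacKernel n) = H := by
  have := hH.1
  have := isProbabilityMeasure_moveLaw hn
  refine Measure.ext_of_lintegral _ fun f hf => ?_
  calc ∫⁻ y, f y ∂H.bind (kacKernel n)
      = ∫⁻ z, ∫⁻ x, f (moveRot z * x) ∂H ∂moveLaw n := by
        rw [lintegral_bind_kacKernel hf]
        exact lintegral_lintegral_swap (hf.comp
          ((measurable_moveRot.comp measurable_snd).mul measurable_fst)).aemeasurable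
    _ = ∫⁻ _, ∫⁻ x, f x ∂H ∂moveLaw n := lintegral_congr fun z => by
        rw [← lintegral_map hf (measurable_const_mul _), (hH.2.2 _ (moveRot_mem_SO z)).1]
    _ = ∫⁻ x, f x ∂H := by simp

end MoveLaw

/-! ### Contraction of the energy -/

theorem lintegral_hsNormSq_sub_smul_kacGen {n : ℕ} (hn : 2 ≤ n) {A : Matrix (Fin n) (Fin n) ℝ}
    (hA : Aᵀ = -A) :
    ∫⁻ z, ENNReal.ofReal (hsNormSq (A - A z.1.1.2 z.1.1.1 • kacGen z.1.1.1 z.1.1.2)) ∂moveLaw n =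
      ENNReal.ofReal (1 - 1 / n.choose 2) * ENNReal.ofReal (hsNormSq A) := by
  have hC : (0 : ℝ) < n.choose 2 := by exact_mod_cast Nat.choose_pos hn
  have hsum : ∑ p : pairs n, hsNormSq (A - A p.1.2 p.1.1 • kacGen p.1.1 p.1.2) =
      (n.choose 2 - 1) * hsNormSq A := by
    simp only [hsNormSq_sub_smul_kacGen (fst_ne_snd_of_pairs _) hA, Finset.sum_sub_distrib,
      Finset.sum_coe_sort (pairs n) fun p => 2 * A p.2 p.1 ^ 2,
      sum_pairs_two_mul_sq_eq_hsNormSq hA, Finset.sum_const, Finset.card_univ, Fintype.card_coe,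
      card_pairs, nsmul_eq_mul]
    ring
  rw [lintegral_moveLaw_fst fun p =>
      ENNReal.ofReal (hsNormSq (A - A p.1.2 p.1.1 • kacGen p.1.1 p.1.2)),
    ← ENNReal.ofReal_sum_of_nonneg fun _ _ => hsNormSq_nonneg _, hsum,
    ← ENNReal.ofReal_natCast, ← ENNReal.ofReal_inv_of_pos hC,
    ← ENNReal.ofReal_mul (inv_nonneg.mpr hC.le), ← ENNReal.ofReal_mul' (hsNormSq_nonneg A)]
  congr 1
  field_simp

/-! ### Synchronized rotations of a curve -/

theorem measurable_intervalIntegral {Ω : Type*} [MeasurableSpace Ω] {a : Ω → ℝ → ℝ}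
    (ha : Measurable (Function.uncurry a)) :
    Measurable fun z : Ω × ℝ => ∫ u in (0 : ℝ)..z.2, a z.1 u := by
  have hau : Measurable fun w : (Ω × ℝ) × ℝ => a w.1.1 w.2 :=
    ha.comp ((measurable_fst.comp measurable_fst).prodMk measurable_snd)
  have hs : Measurable fun w : (Ω × ℝ) × ℝ => w.1.2 := measurable_snd.comp measurable_fst
  have hind {S : Set ((Ω × ℝ) × ℝ)} (hS : MeasurableSet S) :
      Measurable fun z => ∫ u, S.indicator (fun w => a w.1.1 w.2) (z, u) :=
    (hau.indicator hS).stronglyMeasurable.integral_prod_right'.measurable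
  simp only [intervalIntegral, ← integral_indicator measurableSet_Ioc]
  exact (hind ((measurableSet_lt measurable_const measurable_snd).inter
      (measurableSet_le measurable_snd hs))).sub
    (hind ((measurableSet_lt hs measurable_snd).inter
      (measurableSet_le measurable_snd measurable_const)))

section Synchronize

variable {n : ℕ}

/-- The angle accumulated in the plane `p` by a curve with logarithmic derivative `A`. -/
def syncAngle (A : ℝ → Matrix (Fin n) (Fin n) ℝ) (p : pairs n) (s : ℝ) : ℝ :=
  ∫ u in (0 : ℝ)..s, A u p.1.2 p.1.1

/-- The rotation applied at parameter `s` of a curve with logarithmic derivative `A` when the move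
`z = ((i,j),θ)` is drawn: subtracting the accumulated angle from `θ` cancels the component of the
curve's velocity along the generator of the plane. -/
def syncRot (A : ℝ → Matrix (Fin n) (Fin n) ℝ) (z : pairs n × ℝ) (s : ℝ) :
    Matrix (Fin n) (Fin n) ℝ :=
  moveRot (z.1, z.2 - syncAngle A z.1 s)

/-- The logarithmic derivative of the curve obtained by applying `syncRot A z`. -/
def syncLogDeriv (A : ℝ → Matrix (Fin n) (Fin n) ℝ) (z : pairs n × ℝ) (s : ℝ) :
    Matrix (Fin n) (Fin n) ℝ :=
  syncRot A z s * (A s - A s z.1.1.2 z.1.1.1 • kacGen z.1.1.1 z.1.1.2) * (syncRot A z s)ᵀ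

theorem hsNormSq_syncLogDeriv (A : ℝ → Matrix (Fin n) (Fin n) ℝ) (z : pairs n × ℝ) (s : ℝ) :
    hsNormSq (syncLogDeriv A z s) =
      hsNormSq (A s - A s z.1.1.2 z.1.1.1 • kacGen z.1.1.1 z.1.1.2) :=
  hsNormSq_conj_of_orthogonal (SO.mul_transpose_self (moveRot_mem_SO _)) _

theorem isSOCurve_syncRot {A : ℝ → Matrix (Fin n) (Fin n) ℝ} (hA : Continuous A)
    (z : pairs n × ℝ) :
    IsSOCurve (syncRot A z) fun s => -A s z.1.1.2 z.1.1.1 • kacGen z.1.1.1 z.1.1.2 := by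
  have hAz : Continuous fun s => A s z.1.1.2 z.1.1.1 := hA.matrix_elem _ _
  exact (isSOCurve_kacRot (fst_ne_snd_of_pairs z.1)).comp
    (φ := fun s => z.2 - syncAngle A z.1 s)
    (fun s => ((hAz.integral_hasStrictDerivAt 0 s).hasDerivAt).const_sub z.2) hAz.neg

theorem IsSOCurve.syncRot_mul {X A : ℝ → Matrix (Fin n) (Fin n) ℝ} (hX : IsSOCurve X A)
    (z : pairs n × ℝ) : IsSOCurve (fun s => syncRot A z s * X s) (syncLogDeriv A z) := by
  convert (isSOCurve_syncRot hX.continuous_logDeriv z).mul hX using 1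
  funext s
  have hR : syncRot A z s * (syncRot A z s)ᵀ = 1 := SO.mul_transpose_self (moveRot_mem_SO _)
  have hcomm : syncRot A z s * kacGen z.1.1.1 z.1.1.2 = kacGen z.1.1.1 z.1.1.2 * syncRot A z s :=
    commute_kacRot_kacGen (fst_ne_snd_of_pairs z.1) _
  rw [syncLogDeriv, Matrix.mul_sub, Matrix.sub_mul, Matrix.mul_smul, hcomm, Matrix.smul_mul,
    Matrix.mul_assoc (kacGen _ _), hR, Matrix.mul_one, neg_smul, sub_eq_neg_add]

theorem lintegral_energy_syncLogDeriv (hn : 2 ≤ n) {A : ℝ → Matrix (Fin n) (Fin n) ℝ}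
    (hA : Continuous A) (hskew : ∀ s, (A s)ᵀ = -A s) :
    ∫⁻ z, energy (syncLogDeriv A z) ∂moveLaw n =
      ENNReal.ofReal (1 - 1 / n.choose 2) * energy A := by
  let f (p : pairs n) (s : ℝ) : ℝ≥0∞ :=
    ENNReal.ofReal (hsNormSq (A s - A s p.1.2 p.1.1 • kacGen p.1.1 p.1.2))
  have hf (p : pairs n) : Continuous (f p) :=
    ENNReal.continuous_ofReal.comp (continuous_hsNormSq.comp
      (hA.sub ((hA.matrix_elem p.1.2 p.1.1).smul continuous_const)))
  have hcont : Continuous fun s => ENNReal.ofReal (hsNormSq (A s)) :=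
    ENNReal.continuous_ofReal.comp (continuous_hsNormSq.comp hA)
  simp only [energy, hsNormSq_syncLogDeriv]
  calc ∫⁻ z, (∫⁻ s in Set.Ioc (0 : ℝ) 1, f z.1 s) ∂moveLaw n
      = (n.choose 2 : ℝ≥0∞)⁻¹ * ∑ p, ∫⁻ s in Set.Ioc (0 : ℝ) 1, f p s :=
        lintegral_moveLaw_fst fun p => ∫⁻ s in Set.Ioc (0 : ℝ) 1, f p s
    _ = ∫⁻ s in Set.Ioc (0 : ℝ) 1, (n.choose 2 : ℝ≥0∞)⁻¹ * ∑ p, f p s := by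
        rw [lintegral_const_mul _ (Finset.measurable_fun_sum _ fun p _ => (hf p).measurable),
          lintegral_finsetSum _ fun p _ => (hf p).measurable]
    _ = ∫⁻ s in Set.Ioc (0 : ℝ) 1,
        ENNReal.ofReal (1 - 1 / n.choose 2) * ENNReal.ofReal (hsNormSq (A s)) := by
        refine lintegral_congr fun s => ?_
        rw [← lintegral_moveLaw_fst, lintegral_hsNormSq_sub_smul_kacGen hn (hskew s)]
    _ = ENNReal.ofReal (1 - 1 / n.choose 2) *
        ∫⁻ s in Set.Ioc (0 : ℝ) 1, ENNReal.ofReal (hsNormSq (A s)) :=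
        lintegral_const_mul _ hcont.measurable

end Synchronize

/-! ### Random curves -/

/-- A random curve `X` in `SO n` over `(Ω, P)` with random logarithmic derivative `A`. -/
structure IsRandomSOCurve {n : ℕ} {Ω : Type*} [MeasurableSpace Ω] (P : Measure Ω)
    (X A : Ω → ℝ → Matrix (Fin n) (Fin n) ℝ) : Prop where
  measurable_apply : ∀ s, Measurable fun ω => X ω s
  measurable_logDeriv : Measurable (Function.uncurry A)
  ae_isSOCurve : ∀ᵐ ω ∂P, IsSOCurve (X ω) (A ω)

section RandomCurves

variable {n : ℕ} {Ω : Type*} [MeasurableSpace Ω] {P : Measure Ω}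
  {X A : Ω → ℝ → Matrix (Fin n) (Fin n) ℝ}

theorem measurable_syncRot (hA : Measurable (Function.uncurry A)) :
    Measurable fun w : (Ω × (pairs n × ℝ)) × ℝ => syncRot (A w.1.1) w.1.2 w.2 := by
  have hangle : Measurable fun w : (Ω × ℝ) × pairs n => syncAngle (A w.1.1) w.2 w.1.2 :=
    measurable_from_prod_countable_left fun p => measurable_intervalIntegral
      (a := fun ω u => A ω u p.1.2 p.1.1)
      ((continuous_id.matrix_elem p.1.2 p.1.1).measurable.comp hA)
  exact measurable_moveRot.comp (measurable_fst.snd.fst.prodMk (measurable_fst.snd.snd.sub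
    (hangle.comp ((measurable_fst.fst.prodMk measurable_snd).prodMk measurable_fst.snd.fst))))

theorem measurable_syncLogDeriv (hA : Measurable (Function.uncurry A)) :
    Measurable (Function.uncurry fun w : Ω × (pairs n × ℝ) => syncLogDeriv (A w.1) w.2) := by
  have hproj : Measurable fun w : Matrix (Fin n) (Fin n) ℝ × pairs n =>
      w.1 - w.1 w.2.1.2 w.2.1.1 • kacGen w.2.1.1 w.2.1.2 :=
    measurable_from_prod_countable_left fun p =>
      have hp : Continuous fun B : Matrix (Fin n) (Fin n) ℝ =>
          B - B p.1.2 p.1.1 • kacGen p.1.1 p.1.2 :=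
        continuous_id.sub ((continuous_id.matrix_elem p.1.2 p.1.1).smul continuous_const)
      hp.measurable
  have hR := measurable_syncRot hA
  exact (hR.mul (hproj.comp ((hA.comp (measurable_fst.fst.prodMk measurable_snd)).prodMk
    measurable_fst.snd.fst))).mul (continuous_id.matrix_transpose.measurable.comp hR)

theorem measurable_energy (hA : Measurable (Function.uncurry A)) :
    Measurable fun ω => energy (A ω) :=
  Measurable.lintegral_prod_right' (f := fun w : Ω × ℝ => ENNReal.ofReal (hsNormSq (A w.1 w.2)))
    (ENNReal.measurable_ofReal.comp (continuous_hsNormSq.measurable.comp hA))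

/-- The mean energy of a random curve with logarithmic derivative `A`. -/
def meanEnergy (P : Measure Ω) (A : Ω → ℝ → Matrix (Fin n) (Fin n) ℝ) : ℝ≥0∞ :=
  ∫⁻ ω, energy (A ω) ∂P

namespace IsRandomSOCurve

theorem sync (hX : IsRandomSOCurve P X A) :
    IsRandomSOCurve (P.prod (moveLaw n)) (fun w s => syncRot (A w.1) w.2 s * X w.1 s)
      (fun w => syncLogDeriv (A w.1) w.2) where
  measurable_apply s := ((measurable_syncRot hX.measurable_logDeriv).comp
    (measurable_id.prodMk measurable_const)).mul ((hX.measurable_apply s).comp measurable_fst)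
  measurable_logDeriv := measurable_syncLogDeriv hX.measurable_logDeriv
  ae_isSOCurve := by
    filter_upwards [Measure.quasiMeasurePreserving_fst.ae hX.ae_isSOCurve] with w hw
    exact hw.syncRot_mul w.2

/-- Since the uniform law of the angle is invariant under shifts, each point of the synchronized
curve has performed a genuine step of Kac's walk. -/
theorem map_sync_apply (hX : IsRandomSOCurve P X A) (s : ℝ) :
    (P.prod (moveLaw n)).map (fun w => syncRot (A w.1) w.2 s * X w.1 s) =
      (P.map fun ω => X ω s).bind (kacKernel n) := by
  have hXs := hX.measurable_apply s
  refine Measure.ext_of_lintegral _ fun f hf => ?_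
  calc ∫⁻ y, f y ∂(P.prod (moveLaw n)).map (fun w => syncRot (A w.1) w.2 s * X w.1 s)
      = ∫⁻ ω, ∫⁻ z, f (syncRot (A ω) z s * X ω s) ∂moveLaw n ∂P := by
        rw [lintegral_map hf (hX.sync.measurable_apply s),
          lintegral_prod (fun w => f (syncRot (A w.1) w.2 s * X w.1 s))
            (hf.comp (hX.sync.measurable_apply s)).aemeasurable]
    _ = ∫⁻ ω, ∫⁻ z, f (moveRot z * X ω s) ∂moveLaw n ∂P := lintegral_congr fun ω =>
        lintegral_moveLaw_sub (f := fun R => f (R * X ω s)) (hf.comp (measurable_mul_const _))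
          fun p => syncAngle (A ω) p s
    _ = ∫⁻ y, f y ∂(P.map fun ω => X ω s).bind (kacKernel n) := by
        rw [lintegral_bind_kacKernel hf, lintegral_map _ hXs]
        exact Measurable.lintegral_prod_right' (f := fun w => f (moveRot w.2 * w.1))
          (hf.comp ((measurable_moveRot.comp measurable_snd).mul measurable_fst))

theorem meanEnergy_sync (hn : 2 ≤ n) (hX : IsRandomSOCurve P X A) :
    meanEnergy (P.prod (moveLaw n)) (fun w => syncLogDeriv (A w.1) w.2) =
      ENNReal.ofReal (1 - 1 / n.choose 2) * meanEnergy P A := by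
  have hsync : Measurable fun w : Ω × (pairs n × ℝ) => energy (syncLogDeriv (A w.1) w.2) :=
    measurable_energy (measurable_syncLogDeriv hX.measurable_logDeriv)
  rw [meanEnergy, lintegral_prod (fun w => energy (syncLogDeriv (A w.1) w.2)) hsync.aemeasurable,
    meanEnergy, ← lintegral_const_mul _ (measurable_energy hX.measurable_logDeriv)]
  refine lintegral_congr_ae ?_
  filter_upwards [hX.ae_isSOCurve] with ω hω
  exact lintegral_energy_syncLogDeriv hn hω.continuous_logDeriv hω.transpose_logDeriv

theorem wassersteinE_le_meanEnergy (hX : IsRandomSOCurve P X A) :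
    wassersteinE (DSO n) 2 (P.map fun ω => X ω 0) (P.map fun ω => X ω 1) ≤
      meanEnergy P A ^ (1 / 2 : ℝ) := by
  have hpair : Measurable fun ω => (X ω 0, X ω 1) :=
    (hX.measurable_apply 0).prodMk (hX.measurable_apply 1)
  have hcoupling : IsCoupling (P.map fun ω => (X ω 0, X ω 1))
      (P.map fun ω => X ω 0) (P.map fun ω => X ω 1) :=
    ⟨Measure.map_map measurable_fst hpair, Measure.map_map measurable_snd hpair⟩
  refine iInf₂_le_of_le _ hcoupling (ENNReal.rpow_le_rpow ?_ one_half_pos.le)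
  refine (lintegral_map_le _ _).trans (lintegral_mono_ae ?_)
  filter_upwards [hX.ae_isSOCurve] with ω hω
  exact hω.DSO_rpow_two_le_energy

theorem wassersteinE_kernelIterate_kacKernel_le (hn : 2 ≤ n) (hX : IsRandomSOCurve P X A) (t : ℕ) :
    wassersteinE (DSO n) 2 (kernelIterate (kacKernel n) t (P.map fun ω => X ω 0))
        (kernelIterate (kacKernel n) t (P.map fun ω => X ω 1)) ≤
      (ENNReal.ofReal (1 - 1 / n.choose 2) ^ t * meanEnergy P A) ^ (1 / 2 : ℝ) := by
  induction t generalizing Ω with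
  | zero => simpa [kernelIterate] using hX.wassersteinE_le_meanEnergy
  | succ t ih =>
    simp only [kernelIterate_succ_eq_bind, ← hX.map_sync_apply]
    refine (ih hX.sync).trans_eq ?_
    rw [hX.meanEnergy_sync hn, pow_succ, mul_assoc]

end IsRandomSOCurve

end RandomCurves

/-! ### Random geodesics to the Haar measure -/

theorem IsHaarLike.mconv_eq {X : Type*} [Monoid X] [MeasurableSpace X] [MeasurableMul₂ X]
    {S : Set X} {H μ : Measure X} (hH : IsHaarLike S H) [IsProbabilityMeasure μ] (hμ : μ Sᶜ = 0) :
    H ∗ₘ μ = H := by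
  have := hH.1
  refine Measure.ext_of_lintegral _ fun f hf => ?_
  calc ∫⁻ y, f y ∂(H ∗ₘ μ)
      = ∫⁻ x, ∫⁻ g, f (g * x) ∂H ∂μ := by
        rw [Measure.lintegral_mconv_eq_lintegral_prod hf,
          lintegral_prod_symm (fun w : X × X => f (w.1 * w.2))
            (hf.comp measurable_mul).aemeasurable]
    _ = ∫⁻ _, ∫⁻ g, f g ∂H ∂μ := by
        refine lintegral_congr_ae ?_
        filter_upwards [mem_ae_iff.mpr hμ] with x hx
        rw [← lintegral_map hf (measurable_mul_const x), (hH.2.2 x hx).2]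
    _ = ∫⁻ y, f y ∂H := by simp

theorem exists_isRandomSOCurve {n : ℕ} {H μ : Measure (Matrix (Fin n) (Fin n) ℝ)}
    (hH : IsHaarLike (SO n) H) [IsProbabilityMeasure μ] (hμ : μ (SO n)ᶜ = 0) :
    ∃ (P : Measure (Matrix (Fin n) (Fin n) ℝ × Matrix (Fin n) (Fin n) ℝ))
      (X A : Matrix (Fin n) (Fin n) ℝ × Matrix (Fin n) (Fin n) ℝ → ℝ → Matrix (Fin n) (Fin n) ℝ),
      IsRandomSOCurve P X A ∧ P.map (fun ω => X ω 0) = μ ∧ P.map (fun ω => X ω 1) = H ∧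
        meanEnergy P A ≤ ENNReal.ofReal (Real.pi ^ 2 * n) := by
  obtain ⟨L, hLmeas, hL⟩ := exists_measurable_log n
  have := hH.1
  have hfst : ∀ᵐ w ∂H.prod μ, w.1 ∈ SO n :=
    Measure.quasiMeasurePreserving_fst.ae (mem_ae_iff.mpr hH.2.1)
  have hsnd : ∀ᵐ w ∂H.prod μ, w.2 ∈ SO n :=
    Measure.quasiMeasurePreserving_snd.ae (mem_ae_iff.mpr hμ)
  have hLfst : Measurable fun w : Matrix (Fin n) (Fin n) ℝ × Matrix (Fin n) (Fin n) ℝ => L w.1 :=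
    hLmeas.comp measurable_fst
  refine ⟨H.prod μ, fun w s => NormedSpace.exp (s • L w.1) * w.2, fun w _ => L w.1, ⟨?_, ?_, ?_⟩,
    ?_, ?_, ?_⟩
  · exact fun s => (continuous_matrix_exp.measurable.comp (hLfst.const_smul s)).mul measurable_snd
  · exact hLfst.comp measurable_fst
  · filter_upwards [hfst, hsnd] with w hg hx
    exact (isSOCurve_exp_smul (hL _ hg).1).mul_const hx
  · simp
  · calc (H.prod μ).map (fun w => NormedSpace.exp ((1 : ℝ) • L w.1) * w.2)
        = H ∗ₘ μ := by
          refine Measure.map_congr ?_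
          filter_upwards [hfst] with w hg
          rw [one_smul, (hL _ hg).2.2]
      _ = H := hH.mconv_eq hμ
  · calc meanEnergy (H.prod μ) (fun w _ => L w.1)
        ≤ ∫⁻ _, ENNReal.ofReal (Real.pi ^ 2 * n) ∂H.prod μ := by
          refine lintegral_mono_ae ?_
          filter_upwards [hfst] with w hg
          simpa [energy] using ENNReal.ofReal_le_ofReal (hL _ hg).2.1
      _ = ENNReal.ofReal (Real.pi ^ 2 * n) := by simp

/-! ### The mixing time -/

theorem one_sub_inv_choose_two_pow_le {n : ℕ} (hn : 2 ≤ n) (t : ℕ) :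
    (1 - 1 / (n.choose 2 : ℝ)) ^ t ≤ Real.exp (-(2 * (t / n ^ 2))) := by
  have hn' : (0 : ℝ) < n := by exact_mod_cast two_pos.trans_le hn
  have hC : (1 : ℝ) ≤ n.choose 2 := by exact_mod_cast Nat.choose_pos hn
  have hCn : (n.choose 2 : ℝ) ≤ n ^ 2 / 2 := by
    rw [Nat.cast_choose_two]
    linarith [sq (n : ℝ)]
  have hrate : (2 : ℝ) / n ^ 2 ≤ 1 / n.choose 2 := by
    simpa using one_div_le_one_div_of_le (one_pos.trans_le hC) hCn
  calc (1 - 1 / (n.choose 2 : ℝ)) ^ t ≤ Real.exp (-(2 / n ^ 2)) ^ t := by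
        refine pow_le_pow_left₀ (sub_nonneg.mpr (div_le_one_of_le₀ hC (zero_le_one.trans hC))) ?_ t
        exact (sub_le_sub_left hrate 1).trans (Real.one_sub_le_exp_neg _)
    _ = Real.exp (-(2 * (t / n ^ 2))) := by
        rw [← Real.exp_nat_mul]
        ring_nf

theorem one_sub_inv_choose_two_pow_mul_le_sq {n : ℕ} (hn : 2 ≤ n) {ε : ℝ} (hε : 0 < ε) {t : ℕ}
    (ht : (n : ℝ) ^ 2 * Real.log (Real.pi * √n / ε) ≤ t) :
    (1 - 1 / (n.choose 2 : ℝ)) ^ t * (Real.pi ^ 2 * n) ≤ ε ^ 2 := by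
  have hn' : (0 : ℝ) < n := by exact_mod_cast two_pos.trans_le hn
  have hq : 0 < Real.pi * √n / ε := by positivity
  have hlog : Real.log (Real.pi * √n / ε) ≤ t / n ^ 2 := by
    rwa [le_div_iff₀' (by positivity)]
  calc (1 - 1 / (n.choose 2 : ℝ)) ^ t * (Real.pi ^ 2 * n)
      ≤ Real.exp (-(2 * Real.log (Real.pi * √n / ε))) * (Real.pi ^ 2 * n) := by
        gcongr
        exact (one_sub_inv_choose_two_pow_le hn t).trans (by gcongr)
    _ = ((Real.pi * √n / ε) ^ 2)⁻¹ * (Real.pi ^ 2 * n) := by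
        rw [Real.exp_neg, two_mul, Real.exp_add, Real.exp_log hq, ← sq]
    _ = ε ^ 2 := by
        rw [div_pow, mul_pow, Real.sq_sqrt hn'.le]
        field_simp

theorem ofReal_one_sub_inv_choose_two_pow_mul {n : ℕ} (hn : 2 ≤ n) (t : ℕ) (c : ℝ) :
    ENNReal.ofReal (1 - 1 / n.choose 2) ^ t * ENNReal.ofReal c =
      ENNReal.ofReal ((1 - 1 / n.choose 2) ^ t * c) := by
  have hC : (1 : ℝ) ≤ n.choose 2 := by exact_mod_cast Nat.choose_pos hn
  have hq : (0 : ℝ) ≤ 1 - 1 / n.choose 2 :=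
    sub_nonneg.mpr (div_le_one_of_le₀ hC (zero_le_one.trans hC))
  rw [ENNReal.ofReal_mul (pow_nonneg hq t), ENNReal.ofReal_pow hq]

/-- **Theorem 1 (Main result).** For every `n ≥ 2` and `ε > 0`, Kac's random walk on
`SO(n)` satisfies `τ_{D,2}(ε) ≤ ⌈n² ln(π√n/ε)⌉`: for every probability measure `μ`
on `SO(n)` and every integer `t ≥ n² ln(π√n/ε)`, the time-`t` distribution `μK^t` is
within `ε` of the Haar measure in `L²` transportation cost for the intrinsic metric `D`. -/
theorem kac_walk_mixing_time (n : ℕ) (hn : 2 ≤ n) (ε : ℝ) (hε : 0 < ε)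
    (μ : Measure (Matrix (Fin n) (Fin n) ℝ)) (hμprob : IsProbabilityMeasure μ)
    (hμSO : μ (SO n)ᶜ = 0) (t : ℕ)
    (ht : (n : ℝ) ^ 2 * Real.log (Real.pi * Real.sqrt n / ε) ≤ (t : ℝ)) :
    wassersteinE (DSO n) 2 (kernelIterate (kacKernel n) t μ) (haarLike (SO n)) ≤
      ENNReal.ofReal ε := by
  have hH := isHaarLike_haarLike_SO n
  obtain ⟨P, X, A, hX, h0, h1, hP⟩ := exists_isRandomSOCurve hH hμSO
  have hwass := hX.wassersteinE_kernelIterate_kacKernel_le hn t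
  rw [h0, h1, kernelIterate_eq_self (bind_kacKernel_of_isHaarLike hn hH)] at hwass
  calc wassersteinE (DSO n) 2 (kernelIterate (kacKernel n) t μ) (haarLike (SO n))
      ≤ (ENNReal.ofReal (1 - 1 / n.choose 2) ^ t * ENNReal.ofReal (Real.pi ^ 2 * n)) ^
        (1 / 2 : ℝ) := hwass.trans (by gcongr)
    _ ≤ ENNReal.ofReal (ε ^ 2) ^ (1 / 2 : ℝ) := by
        rw [ofReal_one_sub_inv_choose_two_pow_mul hn]
        gcongr
        exact one_sub_inv_choose_two_pow_mul_le_sq hn hε ht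
    _ = ENNReal.ofReal ε := by
        rw [ENNReal.ofReal_rpow_of_pos (by positivity), ← Real.sqrt_eq_rpow, Real.sqrt_sq hε.le]

end
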